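/- arXiv:1208.1225 — 9 statements merged into one kernel-verified Lean document; each statement's English description precedes it below -/
import Mathlib

section
/- Consider the Shannon code of block length n for a first-order Markov source on {1,…,r} whose transition matrix is strictly positive. If at least one of the numbers α_{jk} = log[ p(j|1)·p(j|j) / (p(k|1)·p(j|k)) ], j,k ∈ {1,…,r}, is irrational, then the average redundancy satisfies R_n = 1/2 + o(1), i.e., lim_{n→∞} R_n = 1/2. -/
/-!
Since `vrho (-u) = Int.fract u`, the redundancy is the mean of the fractional part of
`log₂ μ(x)` under the law `μ` of the block, and the claim follows once `log₂ μ(x)` is shown to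
equidistribute modulo one.

By Weyl's criterion (`tendsto_sum_of_fourier`, `tendsto_sum_fract_half`) it is enough that, for
each integer `m ≠ 0`, the exponential sum `∑ μ(x) e^(2πi m log₂ μ(x))` tends to zero. The map
`a ↦ a e^(2πi m log₂ a)` (`twist`) is multiplicative, so this sum is the sum of the entries of
`A ^ n v` (`sum_paths`), where `A` is the entrywise twist of the transition matrix. The columns of
`A` have `ℓ¹` norm one. The entry of `A ^ 2` from state `0` to state `j` is a sum over the
intermediate state; the irrationality of `α_{jk}` says that the summands for the intermediate
states `j` and `k` have different phases (`not_sameRay_twist`), so the triangle inequality is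
strict there. As every state reaches state `0` in one step, all columns of `A ^ 3` have `ℓ¹` norm
less than one, and `A ^ n v` decays geometrically (`tendsto_l1_iterate`).
-/

/-!
STATEMENT 0: Shannon code for a Markov source with strictly positive
transition matrix; if some α_{jk} is irrational then R_n → 1/2.
The alphabet is `Fin (r+2)` (so its size is an arbitrary integer ≥ 2);
`p j k` is the probability of moving to state `j` from state `k`.
Block length `n+1` (so all block lengths ≥ 1 are covered).
-/

/-- ϱ(u) = ⌈u⌉ − u -/
noncomputable def vrho (u : ℝ) : ℝ := (⌈u⌉ : ℝ) - u

/-- Probability of the string `x` of length `n+1` under the Markov source with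
initial probabilities `pinit` and transition probabilities `p j k = p(j|k)`. -/
noncomputable def markovProb {r n : ℕ} (pinit : Fin r → ℝ) (p : Fin r → Fin r → ℝ)
    (x : Fin (n + 1) → Fin r) : ℝ :=
  pinit (x 0) * ∏ t : Fin n, p (x t.succ) (x t.castSucc)

/-- Average unnormalized redundancy of the Shannon code of block length `n+1`. -/
noncomputable def shannonRed (r n : ℕ) (pinit : Fin r → ℝ) (p : Fin r → Fin r → ℝ) : ℝ :=
  ∑ x : Fin (n + 1) → Fin r,
    markovProb pinit p x * vrho (-Real.logb 2 (markovProb pinit p x))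

open Filter Topology MeasureTheory

/-! ### Weyl's criterion -/

/-- Weyl's criterion for finitely supported probability measures on the circle, tested against
continuous functions. -/
lemma tendsto_sum_of_fourier {ι : ℕ → Type} [∀ n, Fintype (ι n)] (w : ∀ n, ι n → ℝ)
    (θ : ∀ n, ι n → UnitAddCircle) (hw : ∀ n x, 0 ≤ w n x) (hw1 : ∀ n, ∑ x, w n x = 1)
    (h : ∀ m : ℤ, m ≠ 0 →
      Tendsto (fun n => ∑ x, (w n x : ℂ) * fourier m (θ n x)) atTop (𝓝 0))
    (f : C(UnitAddCircle, ℂ)) :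
    Tendsto (fun n => ∑ x, (w n x : ℂ) * f (θ n x)) atTop
      (𝓝 (∫ t, f t ∂AddCircle.haarAddCircle)) := by
  have hint : ∀ g : C(UnitAddCircle, ℂ), Integrable g AddCircle.haarAddCircle := fun g =>
    g.continuous.integrable_of_hasCompactSupport (HasCompactSupport.of_compactSpace _)
  -- The claim holds for trigonometric polynomials.
  have hspan : ∀ g ∈ Submodule.span ℂ (Set.range (@fourier (1 : ℝ))),
      Tendsto (fun n => ∑ x, (w n x : ℂ) * g (θ n x)) atTop
        (𝓝 (∫ t, g t ∂AddCircle.haarAddCircle)) := by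
    intro g hg
    induction hg using Submodule.span_induction with
    | mem g hg =>
      obtain ⟨m, rfl⟩ := hg
      have hcoef : ∫ t, fourier m t ∂(@AddCircle.haarAddCircle 1 _) = if m = 0 then 1 else 0 := by
        have h1 := congrFun (fourierCoeff_fourier (T := 1) m) 0
        simp only [fourierCoeff, neg_zero, fourier_zero, one_smul] at h1
        rw [h1, Pi.single_apply]
        simp [eq_comm]
      rw [hcoef]
      split_ifs with hm
      · subst hm
        have : ∀ n, ∑ x, (w n x : ℂ) * fourier 0 (θ n x) = 1 := by
          intro n
          simp only [fourier_zero, mul_one]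
          exact_mod_cast hw1 n
        simp only [this]
        exact tendsto_const_nhds
      · exact h m hm
    | zero => simp
    | add g₁ g₂ _ _ h₁ h₂ =>
      have := h₁.add h₂
      rw [← integral_add (hint g₁) (hint g₂)] at this
      simpa [mul_add, Finset.sum_add_distrib] using this
    | smul c g _ hg =>
      have := hg.const_mul c
      rw [← integral_const_mul] at this
      simpa [Finset.mul_sum, mul_left_comm] using this
  -- Both functionals are contractions for the sup norm, so the claim extends to the closure.
  rw [Metric.tendsto_atTop]
  intro ε hε
  have hf : f ∈ (Submodule.span ℂ (Set.range (@fourier (1 : ℝ)))).topologicalClosure := by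
    rw [span_fourier_closure_eq_top]; trivial
  obtain ⟨g, hg, hfg⟩ := Metric.mem_closure_iff.1 hf (ε / 3) (by positivity)
  obtain ⟨N, hN⟩ := Metric.tendsto_atTop.1 (hspan g hg) (ε / 3) (by positivity)
  refine ⟨N, fun n hn => ?_⟩
  have hpt : ∀ t, ‖f t - g t‖ ≤ dist f g := fun t => by
    rw [← dist_eq_norm]; exact ContinuousMap.dist_apply_le_dist t
  have h1 : dist (∑ x, (w n x : ℂ) * f (θ n x)) (∑ x, (w n x : ℂ) * g (θ n x)) ≤ dist f g := by
    rw [dist_eq_norm, ← Finset.sum_sub_distrib]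
    calc _ ≤ ∑ x, ‖(w n x : ℂ) * f (θ n x) - w n x * g (θ n x)‖ := norm_sum_le _ _
      _ ≤ ∑ x, w n x * dist f g := by
        refine Finset.sum_le_sum fun x _ => ?_
        rw [← mul_sub, norm_mul, Complex.norm_real, Real.norm_of_nonneg (hw n x)]
        exact mul_le_mul_of_nonneg_left (hpt _) (hw n x)
      _ = dist f g := by rw [← Finset.sum_mul, hw1, one_mul]
  have h2 : dist (∫ t, g t ∂(@AddCircle.haarAddCircle 1 _))
      (∫ t, f t ∂(@AddCircle.haarAddCircle 1 _)) ≤ dist f g := by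
    rw [dist_comm, dist_eq_norm, ← integral_sub (hint f) (hint g)]
    have := norm_integral_le_of_norm_le_const (μ := @AddCircle.haarAddCircle 1 _)
      (f := fun t => f t - g t) (Eventually.of_forall hpt)
    simpa using this
  have h3 := hN n hn
  have h4 := dist_triangle4 (∑ x, (w n x : ℂ) * f (θ n x)) (∑ x, (w n x : ℂ) * g (θ n x))
    (∫ t, g t ∂(@AddCircle.haarAddCircle 1 _)) (∫ t, f t ∂(@AddCircle.haarAddCircle 1 _))
  linarith

lemma tendsto_sum_fract {ι : ℕ → Type} [∀ n, Fintype (ι n)] (w : ∀ n, ι n → ℝ)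
    (u : ∀ n, ι n → ℝ) (hw : ∀ n x, 0 ≤ w n x) (hw1 : ∀ n, ∑ x, w n x = 1)
    (h : ∀ m : ℤ, m ≠ 0 →
      Tendsto (fun n => ∑ x, (w n x : ℂ) * fourier m (u n x : UnitAddCircle)) atTop (𝓝 0))
    (g : ℝ → ℝ) (hg : Continuous g) (hg01 : g 0 = g 1) :
    Tendsto (fun n => ∑ x, w n x * g (Int.fract (u n x))) atTop (𝓝 (∫ t in (0 : ℝ)..1, g t)) := by
  have hcont : Continuous (AddCircle.liftIco 1 0 (fun t => (g t : ℂ))) :=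
    AddCircle.liftIco_continuous (by simp [hg01]) (by fun_prop)
  have hval : ∀ v : ℝ, AddCircle.liftIco 1 0 (fun t => (g t : ℂ)) (v : UnitAddCircle)
      = g (Int.fract v) := by
    intro v
    have : (v : UnitAddCircle) = (Int.fract v : ℝ) := by
      rw [← sub_eq_zero, ← AddCircle.coe_sub, AddCircle.coe_eq_zero_iff]
      exact ⟨⌊v⌋, by rw [Int.self_sub_fract]; simp⟩
    rw [this, AddCircle.liftIco_coe_apply]
    exact ⟨Int.fract_nonneg v, by simpa using Int.fract_lt_one v⟩
  have key := tendsto_sum_of_fourier w (fun n x => (u n x : UnitAddCircle)) hw hw1 h ⟨_, hcont⟩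
  have hint : ∫ t, AddCircle.liftIco 1 0 (fun t => (g t : ℂ)) t ∂(@AddCircle.haarAddCircle 1 _)
      = ((∫ t in (0 : ℝ)..1, g t : ℝ) : ℂ) := by
    have h1 := fourierCoeff_liftIco_eq (T := 1) (a := 0) (fun t => (g t : ℂ)) 0
    simp only [fourierCoeff, fourierCoeffOn_eq_integral, neg_zero, fourier_zero, one_smul] at h1
    rw [h1]
    simp [intervalIntegral.integral_ofReal]
  simp only [ContinuousMap.coe_mk, hval, hint] at key
  have hre := (Complex.continuous_re.tendsto _).comp key
  refine hre.congr fun n => ?_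
  rw [Function.comp_apply, Complex.re_sum]
  simp [← Complex.ofReal_mul]

/-- The fractional part is discontinuous on the circle, so Weyl's criterion is applied to the
continuous bounds `s - s ^ N ≤ s ≤ s + (1 - s) ^ N`, whose integrals tend to `1 / 2`. -/
lemma tendsto_sum_fract_half {ι : ℕ → Type} [∀ n, Fintype (ι n)] (w : ∀ n, ι n → ℝ)
    (u : ∀ n, ι n → ℝ) (hw : ∀ n x, 0 ≤ w n x) (hw1 : ∀ n, ∑ x, w n x = 1)
    (h : ∀ m : ℤ, m ≠ 0 →
      Tendsto (fun n => ∑ x, (w n x : ℂ) * fourier m (u n x : UnitAddCircle)) atTop (𝓝 0)) :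
    Tendsto (fun n => ∑ x, w n x * Int.fract (u n x)) atTop (𝓝 (1 / 2)) := by
  have hlow : ∀ N : ℕ, Tendsto
      (fun n => ∑ x, w n x * (Int.fract (u n x) - Int.fract (u n x) ^ (N + 1))) atTop
      (𝓝 (1 / 2 - 1 / (N + 2))) := by
    intro N
    have h1 := tendsto_sum_fract w u hw hw1 h (fun s => s - s ^ (N + 1)) (by fun_prop) (by simp)
    have h2 : ∫ t in (0 : ℝ)..1, (t - t ^ (N + 1)) = 1 / 2 - 1 / (N + 2) := by
      rw [intervalIntegral.integral_sub (by simp)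
        ((continuous_pow _).intervalIntegrable _ _), integral_id, integral_pow]
      push_cast
      norm_num [add_assoc]
    rwa [h2] at h1
  have hupp : ∀ N : ℕ, Tendsto
      (fun n => ∑ x, w n x * (Int.fract (u n x) + (1 - Int.fract (u n x)) ^ (N + 1))) atTop
      (𝓝 (1 / 2 + 1 / (N + 2))) := by
    intro N
    have h1 := tendsto_sum_fract w u hw hw1 h (fun s => s + (1 - s) ^ (N + 1))
      (by fun_prop) (by simp)
    have h2 : ∫ t in (0 : ℝ)..1, (t + (1 - t) ^ (N + 1)) = 1 / 2 + 1 / (N + 2) := by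
      have hc : Continuous fun t : ℝ => (1 - t) ^ (N + 1) := by fun_prop
      rw [intervalIntegral.integral_add (by simp) (hc.intervalIntegrable _ _), integral_id,
        intervalIntegral.integral_comp_sub_left (fun t => t ^ (N + 1)), integral_pow]
      push_cast
      norm_num [add_assoc]
    rwa [h2] at h1
  have hN : Tendsto (fun N : ℕ => 1 / ((N : ℝ) + 2)) atTop (𝓝 0) := by
    have := (tendsto_add_atTop_iff_nat 1).2 (tendsto_one_div_add_atTop_nhds_zero_nat (𝕜 := ℝ))
    refine this.congr fun N => ?_
    push_cast
    norm_num [add_assoc]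
  refine tendsto_order.2 ⟨fun a ha => ?_, fun a ha => ?_⟩
  · obtain ⟨N, hNa⟩ := (hN.eventually_lt_const (sub_pos.2 ha)).exists
    filter_upwards [(hlow N).eventually_const_lt (show a < _ by linarith)] with n hn
    refine hn.trans_le (Finset.sum_le_sum fun x _ => mul_le_mul_of_nonneg_left ?_ (hw n x))
    have := pow_nonneg (Int.fract_nonneg (u n x)) (N + 1)
    linarith
  · obtain ⟨N, hNa⟩ := (hN.eventually_lt_const (sub_pos.2 ha)).exists
    filter_upwards [(hupp N).eventually_lt_const (show _ < a by linarith)] with n hn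
    refine lt_of_le_of_lt (Finset.sum_le_sum fun x _ => mul_le_mul_of_nonneg_left ?_ (hw n x)) hn
    have := pow_nonneg (sub_nonneg.2 (Int.fract_lt_one (u n x)).le) (N + 1)
    linarith

/-! ### Path sums and powers of the transition matrix -/

/-- The sum over all paths of length `n + 1` with initial weights `v` and transition weights `A`
is the sum of the entries of `A ^ n v`. -/
lemma sum_paths {R : Type*} [CommRing R] {s : ℕ} (A : Fin s → Fin s → R) (n : ℕ) :
    ∀ v : Fin s → R,
    ∑ x : Fin (n + 1) → Fin s, v (x 0) * ∏ t : Fin n, A (x t.succ) (x t.castSucc)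
      = ∑ j, ((Matrix.mulVec (Matrix.of A))^[n] v) j := by
  induction n with
  | zero =>
    intro v
    simp only [Finset.univ_eq_empty, Finset.prod_empty, mul_one, Function.iterate_zero, id]
    exact Fintype.sum_equiv (Equiv.funUnique (Fin 1) (Fin s)) _ _ (fun x => rfl)
  | succ n ih =>
    intro v
    rw [Function.iterate_succ_apply, ← ih,
      ← (Fin.consEquiv fun _ : Fin (n + 2) => Fin s).sum_comp, Fintype.sum_prod_type,
      Finset.sum_comm]
    refine Finset.sum_congr rfl fun x _ => ?_
    simp only [Matrix.mulVec, dotProduct, Matrix.of_apply, Finset.sum_mul]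
    refine Finset.sum_congr rfl fun k _ => ?_
    rw [Fin.prod_univ_succ]
    simp only [Fin.consEquiv_apply, Fin.cons_zero, Fin.cons_succ, Fin.castSucc_zero,
      ← Fin.succ_castSucc]
    ring

/-- The `ℓ¹` norm of a vector over `ℂ`. -/
noncomputable def l1 {s : ℕ} (v : Fin s → ℂ) : ℝ := ∑ j, ‖v j‖

lemma l1_nonneg {s : ℕ} (v : Fin s → ℂ) : 0 ≤ l1 v := Finset.sum_nonneg fun _ _ => norm_nonneg _

lemma l1_mulVec_le {s : ℕ} (M : Matrix (Fin s) (Fin s) ℂ) (v : Fin s → ℂ) :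
    l1 (M.mulVec v) ≤ ∑ l, l1 (fun i => M i l) * ‖v l‖ := by
  unfold l1
  calc ∑ i, ‖M.mulVec v i‖ ≤ ∑ i, ∑ l, ‖M i l‖ * ‖v l‖ := by
        refine Finset.sum_le_sum fun i _ => ?_
        simp only [Matrix.mulVec, dotProduct]
        exact (norm_sum_le _ _).trans_eq (by simp)
    _ = _ := by rw [Finset.sum_comm]; simp [Finset.sum_mul]

lemma l1_mulVec_le_mul {s : ℕ} (M : Matrix (Fin s) (Fin s) ℂ) (v : Fin s → ℂ) (c : ℝ)
    (hc : ∀ l, l1 (fun i => M i l) ≤ c) : l1 (M.mulVec v) ≤ c * l1 v := by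
  refine (l1_mulVec_le M v).trans ?_
  rw [l1, Finset.mul_sum]
  exact Finset.sum_le_sum fun l _ => mul_le_mul_of_nonneg_right (hc l) (norm_nonneg _)

/-- If the column of `A ^ 2` at `z` has `ℓ¹` norm less than one and every state reaches `z` in one
step, then all columns of `A ^ 3` have `ℓ¹` norm less than one and the iterates of `A` decay. -/
lemma tendsto_l1_iterate {s : ℕ} [NeZero s] (A : Matrix (Fin s) (Fin s) ℂ) (z : Fin s)
    (hA : ∀ l, l1 (fun i => A i l) = 1) (hz : ∀ b, A z b ≠ 0)
    (hlt : l1 (fun i => (A * A) i z) < 1) (v : Fin s → ℂ) :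
    Tendsto (fun n => l1 (A.mulVec^[n] v)) atTop (𝓝 0) := by
  have hcol : ∀ M N : Matrix (Fin s) (Fin s) ℂ, ∀ b,
      (fun i => (M * N) i b) = M.mulVec (fun i => N i b) := fun M N b => by
    ext i; simp [Matrix.mul_apply, Matrix.mulVec, dotProduct]
  have hA2 : ∀ l, l1 (fun i => (A * A) i l) ≤ 1 := fun l => by
    rw [hcol]
    refine (l1_mulVec_le_mul A _ 1 fun l => (hA l).le).trans ?_
    rw [hA, one_mul]
  have hA3 : ∀ b, l1 (fun i => (A * A * A) i b) < 1 := fun b => by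
    rw [hcol, ← hA b]
    refine (l1_mulVec_le _ _).trans_lt ?_
    rw [l1]
    refine Finset.sum_lt_sum (fun l _ => mul_le_of_le_one_left (norm_nonneg _) (hA2 l))
      ⟨z, Finset.mem_univ _, mul_lt_of_lt_one_left (norm_pos_iff.2 (hz b)) hlt⟩
  obtain ⟨b₀, hb₀⟩ := Finite.exists_max fun b => l1 (fun i => (A * A * A) i b)
  set c := l1 (fun i => (A * A * A) i b₀) with hc
  have hc0 : 0 ≤ c := l1_nonneg _
  have hstep : ∀ v, l1 (A.mulVec v) ≤ l1 v := fun v => by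
    simpa using l1_mulVec_le_mul A v 1 fun l => (hA l).le
  have hstep3 : ∀ v, l1 (A.mulVec^[3] v) ≤ c * l1 v := fun v => by
    have := l1_mulVec_le_mul (A * A * A) v c hb₀
    simpa [Matrix.mulVec_mulVec, Matrix.mul_assoc] using this
  have hanti : Antitone fun n => l1 (A.mulVec^[n] v) := antitone_nat_of_succ_le fun n => by
    rw [Function.iterate_succ_apply']; exact hstep _
  have hgeo : ∀ q, l1 (A.mulVec^[3 * q] v) ≤ c ^ q * l1 v := by
    intro q
    induction q with
    | zero => simp
    | succ q ih =>
      rw [show 3 * (q + 1) = 3 + 3 * q by ring, Function.iterate_add_apply, pow_succ']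
      refine (hstep3 _).trans ?_
      rw [mul_assoc]
      exact mul_le_mul_of_nonneg_left ih hc0
  have hlim : Tendsto (fun n : ℕ => c ^ (n / 3) * l1 v) atTop (𝓝 0) := by
    have := ((tendsto_pow_atTop_nhds_zero_of_lt_one hc0 (hA3 b₀)).comp
      (Nat.tendsto_div_const_atTop (n := 3) (by norm_num))).mul_const (l1 v)
    simpa using this
  exact squeeze_zero (fun n => l1_nonneg _)
    (fun n => (hanti (Nat.mul_div_le n 3)).trans (hgeo _)) hlim

/-! ### Twisted weights -/

/-- The twisted weight `a · e ^ (2πi m log₂ a)`; it is multiplicative in `a`, also at `a = 0`,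
where the factor `a` removes the junk value of the logarithm. -/
noncomputable def twist (m : ℤ) (a : ℝ) : ℂ :=
  (a : ℂ) * fourier m ((Real.logb 2 a : ℝ) : UnitAddCircle)

lemma twist_mul (m : ℤ) {a b : ℝ} : twist m (a * b) = twist m a * twist m b := by
  rcases eq_or_ne a 0 with rfl | ha
  · simp [twist]
  rcases eq_or_ne b 0 with rfl | hb
  · simp [twist]
  simp only [twist, Real.logb_mul ha hb, AddCircle.coe_add, fourier_apply, smul_add,
    AddCircle.toCircle_add, Circle.coe_mul, Complex.ofReal_mul]
  ring

lemma twist_one (m : ℤ) : twist m 1 = 1 := by simp [twist]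

lemma twist_prod (m : ℤ) {ι : Type*} (s : Finset ι) (f : ι → ℝ) :
    twist m (∏ i ∈ s, f i) = ∏ i ∈ s, twist m (f i) := by
  classical
  induction s using Finset.induction_on with
  | empty => simp [twist_one]
  | insert a s ha ih => rw [Finset.prod_insert ha, Finset.prod_insert ha, twist_mul, ih]

lemma norm_twist (m : ℤ) {a : ℝ} (ha : 0 ≤ a) : ‖twist m a‖ = a := by
  rw [twist, norm_mul, Complex.norm_real, Real.norm_of_nonneg ha, fourier_apply, Circle.norm_coe,
    mul_one]

/-- Twisted weights point in different directions when the log-ratio is irrational. -/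
lemma not_sameRay_twist {m : ℤ} (hm : m ≠ 0) {a b : ℝ} (ha : 0 < a) (hb : 0 < b)
    (h : Irrational (Real.logb 2 (a / b))) : ¬ SameRay ℝ (twist m a) (twist m b) := by
  intro hray
  rw [sameRay_iff_norm_smul_eq, norm_twist m ha.le, norm_twist m hb.le] at hray
  have h1 : (fourier m ((Real.logb 2 b : ℝ) : UnitAddCircle) : ℂ)
      = fourier m ((Real.logb 2 a : ℝ) : UnitAddCircle) := by
    have hab : ((a : ℂ) * b) ≠ 0 := by
      exact_mod_cast (mul_pos ha hb).ne'
    refine mul_left_cancel₀ hab ?_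
    simp only [twist, Complex.real_smul] at hray
    linear_combination hray
  rw [fourier_apply, fourier_apply] at h1
  have h2 := AddCircle.injective_toCircle one_ne_zero (Circle.ext h1)
  rw [eq_comm, ← sub_eq_zero, ← smul_sub, ← AddCircle.coe_sub, ← Real.logb_div ha.ne' hb.ne',
    ← AddCircle.coe_zsmul, AddCircle.coe_eq_zero_iff] at h2
  obtain ⟨k, hk⟩ := h2
  refine (h.intCast_mul hm).ne_int k ?_
  simpa using hk.symm

lemma norm_sum_lt_of_not_sameRay {ι : Type*} [Fintype ι] [DecidableEq ι] (f : ι → ℂ) (j k : ι)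
    (h : ¬ SameRay ℝ (f j) (f k)) : ‖∑ i, f i‖ < ∑ i, ‖f i‖ := by
  have hjk : k ≠ j := by
    rintro rfl; exact h SameRay.rfl
  have hk : k ∈ Finset.univ.erase j := by simp [hjk]
  rw [← Finset.add_sum_erase _ f (Finset.mem_univ j), ← Finset.add_sum_erase _ f hk,
    ← Finset.add_sum_erase _ (fun i => ‖f i‖) (Finset.mem_univ j),
    ← Finset.add_sum_erase _ (fun i => ‖f i‖) hk, ← add_assoc, ← add_assoc]
  exact (norm_add_le _ _).trans_lt
    (add_lt_add_of_lt_of_le (norm_add_lt_of_not_sameRay h) (norm_sum_le _ _))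

lemma markovProb_nonneg {s n : ℕ} {pinit : Fin s → ℝ} {p : Fin s → Fin s → ℝ}
    (hppos : ∀ j k, 0 < p j k) (hinit0 : ∀ j, 0 ≤ pinit j) (x : Fin (n + 1) → Fin s) :
    0 ≤ markovProb pinit p x :=
  mul_nonneg (hinit0 _) (Finset.prod_nonneg fun _ _ => (hppos _ _).le)

lemma sum_markovProb {s : ℕ} (n : ℕ) {pinit : Fin s → ℝ} {p : Fin s → Fin s → ℝ}
    (hpsum : ∀ k, ∑ j, p j k = 1) (hinit1 : ∑ j, pinit j = 1) :
    ∑ x : Fin (n + 1) → Fin s, markovProb pinit p x = 1 := by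
  simp only [markovProb]
  rw [sum_paths]
  have hstep : ∀ v : Fin s → ℝ, ∑ j, (Matrix.of p).mulVec v j = ∑ j, v j := by
    intro v
    simp only [Matrix.mulVec, dotProduct, Matrix.of_apply]
    rw [Finset.sum_comm]
    simp [← Finset.sum_mul, hpsum]
  induction n with
  | zero => simpa using hinit1
  | succ n ih => rw [Function.iterate_succ_apply', hstep, ih]

lemma vrho_neg (u : ℝ) : vrho (-u) = Int.fract u := by
  rw [vrho, Int.ceil_neg, Int.fract]; push_cast; ring

theorem shannon_redundancy_irrational_case (r : ℕ)
    (p : Fin (r + 2) → Fin (r + 2) → ℝ) (pinit : Fin (r + 2) → ℝ)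
    (hppos : ∀ j k, 0 < p j k) (hpsum : ∀ k, ∑ j, p j k = 1)
    (hinit0 : ∀ j, 0 ≤ pinit j) (hinit1 : ∑ j, pinit j = 1)
    (hirr : ∃ j k : Fin (r + 2),
      Irrational (Real.logb 2 (p j 0 * p j j / (p k 0 * p j k)))) :
    Filter.Tendsto (fun n : ℕ => shannonRed (r + 2) n pinit p)
      Filter.atTop (nhds (1 / 2)) := by
  simp only [shannonRed, vrho_neg]
  refine tendsto_sum_fract_half (ι := fun n => Fin (n + 1) → Fin (r + 2))
    (fun n x => markovProb pinit p x) (fun n x => Real.logb 2 (markovProb pinit p x))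
    (fun n x => markovProb_nonneg hppos hinit0 x) (fun n => sum_markovProb n hpsum hinit1) ?_
  intro m hm
  set A : Matrix (Fin (r + 2)) (Fin (r + 2)) ℂ := Matrix.of fun j k => twist m (p j k) with hAdef
  have hsum : ∀ n, ∑ x : Fin (n + 1) → Fin (r + 2), ((markovProb pinit p x : ℝ) : ℂ) *
      fourier m ((Real.logb 2 (markovProb pinit p x) : ℝ) : UnitAddCircle)
      = ∑ j, (A.mulVec^[n] fun i => twist m (pinit i)) j := by
    intro n
    rw [hAdef, ← sum_paths]
    refine Finset.sum_congr rfl fun x _ => ?_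
    change twist m (markovProb pinit p x) = _
    rw [markovProb, twist_mul, twist_prod]
  simp only [hsum]
  have hnorm : ∀ i l, ‖A i l‖ = p i l := fun i l => norm_twist m (hppos i l).le
  have hA : ∀ l, l1 (fun i => A i l) = 1 := fun l => by simp only [l1, hnorm, hpsum]
  have hlt : l1 (fun i => (A * A) i 0) < 1 := by
    obtain ⟨j, k, hjk⟩ := hirr
    have hle : ∀ i, ‖(A * A) i 0‖ ≤ ∑ l, ‖A i l * A l 0‖ := fun i => by
      rw [Matrix.mul_apply]; exact norm_sum_le _ _
    -- The paths `0 → j → j` and `0 → k → j` interfere.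
    have hstrict : ‖(A * A) j 0‖ < ∑ l, ‖A j l * A l 0‖ := by
      rw [Matrix.mul_apply]
      refine norm_sum_lt_of_not_sameRay (fun l => A j l * A l 0) j k ?_
      simp only [hAdef, Matrix.of_apply, ← twist_mul]
      refine not_sameRay_twist hm (mul_pos (hppos _ _) (hppos _ _))
        (mul_pos (hppos _ _) (hppos _ _)) ?_
      rwa [mul_comm (p j j), mul_comm (p j k)]
    calc l1 (fun i => (A * A) i 0) < ∑ i, ∑ l, ‖A i l * A l 0‖ :=
          Finset.sum_lt_sum (fun i _ => hle i) ⟨j, Finset.mem_univ _, hstrict⟩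
      _ = 1 := by
          simp only [norm_mul, hnorm]
          rw [Finset.sum_comm]
          simp [← Finset.sum_mul, hpsum]
  have hz : ∀ b, A 0 b ≠ 0 := fun b => norm_pos_iff.1 (by rw [hnorm]; exact hppos 0 b)
  exact squeeze_zero_norm (fun n => norm_sum_le _ _) (tendsto_l1_iterate A 0 hA hz hlt _)
end

section
/- Consider the Shannon code of block length n for a first-order Markov source on {1,…,r} with strictly positive transition matrix and strictly positive initial probabilities, and suppose all the numbers α_{jk} are rational. Let M be the smallest positive integer such that M·α_{jk} ∈ ℤ for all j,k, and define ζ_{jk}(n) and Ω_n as in the context. Then there exist a sequence of positive reals ξ_n → 0 and a sequence ε_n → 0 (both depending only on the source parameters) such that for all n: R_n ≤ Ω_n + (1/M)·Σ_{j=1}^r Σ_{k=1}^r p_j·π_k·1{ϱ(ζ_{jk}(n)) ∉ (ξ_n, 1−ξ_n)} + ε_n and R_n ≥ Ω_n − (1/M)·Σ_{j=1}^r Σ_{k=1}^r p_j·π_k·1{ϱ(ζ_{jk}(n)) ∉ (ξ_n, 1−ξ_n)} − ε_n. -/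
/-- α_{jk} = log[ p(j|1)p(j|j) / (p(k|1)p(j|k)) ] (state `1` is `0 : Fin r`). -/
noncomputable def alphaJK {r : ℕ} (p : Fin (r + 2) → Fin (r + 2) → ℝ)
    (j k : Fin (r + 2)) : ℝ :=
  Real.logb 2 (p j 0 * p j j / (p k 0 * p j k))

/-- ζ_{jk}(n) = M[−(n−1)log p(1|1) + log p(j|1) − log p(k|1) − log p_j]. -/
noncomputable def zetaJK {r : ℕ} (p : Fin (r + 2) → Fin (r + 2) → ℝ)
    (pinit : Fin (r + 2) → ℝ) (M : ℕ) (j k : Fin (r + 2)) (n : ℕ) : ℝ :=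
  (M : ℝ) * (-(((n : ℝ) - 1)) * Real.logb 2 (p 0 0)
    + Real.logb 2 (p j 0) - Real.logb 2 (p k 0) - Real.logb 2 (pinit j))

/-! ### Convergence of a finite Markov chain -/

open Matrix in
attribute [local instance] Matrix.linftyOpNormedRing in
/-- Doeblin's argument: if some power of a stochastic matrix is entrywise positive, its powers
converge to the matrix all of whose rows are the stationary vector. With `E` that limit, the
matrix `K ^ L - δ E` has norm at most `1 - δ` and agrees with `K ^ L` on the range of `1 - E`. -/
theorem stochastic_pow_tendsto {S : Type*} [Fintype S] [DecidableEq S] [Nonempty S]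
    (K : Matrix S S ℝ) (h0 : ∀ s t, 0 ≤ K s t) (h1 : ∀ s, ∑ t, K s t = 1)
    (v : S → ℝ) (hv0 : ∀ s, 0 ≤ v s) (hv1 : ∑ s, v s = 1)
    (hv : ∀ t, ∑ s, v s * K s t = v t)
    (L : ℕ) (hL0 : 0 < L) (hL : ∀ s t, 0 < (K ^ L) s t) (s t : S) :
    Filter.Tendsto (fun n : ℕ => (K ^ n) s t) Filter.atTop (nhds (v t)) := by
  set E : Matrix S S ℝ := Matrix.of fun _ t => v t with hE
  have hEE : E * E = E := by
    ext a b
    simp [hE, Matrix.mul_apply, ← Finset.sum_mul, hv1]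
  have hKE : K * E = E := by
    ext a b
    simp [hE, Matrix.mul_apply, ← Finset.sum_mul, h1]
  have hEK : E * K = E := by
    ext a b
    simp [hE, Matrix.mul_apply, hv]
  have hKnE : ∀ n : ℕ, K ^ n * E = E := by
    intro n
    induction n with
    | zero => simp
    | succ n ih => rw [pow_succ, Matrix.mul_assoc, hKE, ih]
  have hrow : ∀ (n : ℕ) (a : S), ∑ b, (K ^ n) a b = 1 := by
    intro n
    induction n with
    | zero => intro a; simp [Matrix.one_apply]
    | succ n ih =>
      intro a
      simp only [pow_succ, Matrix.mul_apply]
      rw [Finset.sum_comm]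
      simp [← Finset.mul_sum, h1, ih]
  have hnorm : ∀ (A : Matrix S S ℝ) (c : ℝ), (∀ a b, 0 ≤ A a b) → (∀ a, ∑ b, A a b = c) →
      ‖A‖ ≤ c := by
    intro A c hA hc
    have hc0 : 0 ≤ c := by
      rw [← hc (Classical.arbitrary S)]
      exact Finset.sum_nonneg fun b _ => hA _ b
    rw [Matrix.linfty_opNorm_def]
    lift c to NNReal using hc0
    rw [NNReal.coe_le_coe]
    refine Finset.sup_le fun a _ => ?_
    rw [← NNReal.coe_le_coe, NNReal.coe_sum, ← hc a]
    refine Finset.sum_le_sum fun b _ => ?_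
    simp [abs_of_nonneg (hA a b)]
  obtain ⟨δ, hδ0, hδ⟩ : ∃ δ : ℝ, 0 < δ ∧ ∀ a b, δ ≤ (K ^ L) a b := by
    obtain ⟨x, hx⟩ := Finite.exists_min (fun x : S × S => (K ^ L) x.1 x.2)
    exact ⟨_, hL x.1 x.2, fun a b => hx (a, b)⟩
  have hvle : ∀ b, v b ≤ 1 := fun b => by
    rw [← hv1]
    exact Finset.single_le_sum (fun c _ => hv0 c) (Finset.mem_univ b)
  set B : Matrix S S ℝ := K ^ L - δ • E with hB
  have hBn : ‖B‖ ≤ 1 - δ := by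
    apply hnorm
    · intro a b
      have := hδ a b
      have h2 := mul_le_mul_of_nonneg_left (hvle b) hδ0.le
      simp only [hB, hE, Matrix.sub_apply, Matrix.smul_apply, Matrix.of_apply, smul_eq_mul]
      linarith
    · intro a
      simp only [hB, hE, Matrix.sub_apply, Matrix.smul_apply, Matrix.of_apply, smul_eq_mul,
        Finset.sum_sub_distrib, hrow, ← Finset.mul_sum, hv1, mul_one]
  have hBE : B * (1 - E) = K ^ L * (1 - E) := by
    simp [hB, Matrix.sub_mul, Matrix.mul_sub, hEE, hKnE]
  have hcomm : K * (1 - E) = (1 - E) * K := by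
    simp [Matrix.sub_mul, Matrix.mul_sub, hKE, hEK]
  have hcommL : ∀ n : ℕ, K ^ n * (1 - E) = (1 - E) * K ^ n := by
    intro n
    exact (show Commute K (1 - E) from hcomm).pow_left n
  have hpow : ∀ m : ℕ, (K ^ L) ^ m * (1 - E) = B ^ m * (1 - E) := by
    intro m
    induction m with
    | zero => simp
    | succ m ih =>
      rw [pow_succ, Matrix.mul_assoc, hcommL, ← Matrix.mul_assoc, ih, Matrix.mul_assoc,
        ← hcommL, ← hBE, ← Matrix.mul_assoc, ← pow_succ]
  have hKn : ‖K‖ ≤ 1 := hnorm K 1 h0 h1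
  have hδ1 : 0 ≤ 1 - δ := (norm_nonneg B).trans hBn
  have hKnorm : ∀ n : ℕ, ‖K ^ n‖ ≤ 1 := by
    intro n
    refine hnorm _ 1 (fun a b => ?_) (hrow n)
    induction n generalizing a b with
    | zero => simp only [pow_zero, Matrix.one_apply]; split_ifs <;> norm_num
    | succ n ih =>
      rw [pow_succ, Matrix.mul_apply]
      exact Finset.sum_nonneg fun c _ => mul_nonneg (ih a c) (h0 c b)
  have hBp : ∀ m : ℕ, ‖B ^ m * (1 - E)‖ ≤ (1 - δ) ^ m * ‖1 - E‖ := by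
    intro m
    induction m with
    | zero => simp
    | succ m ih =>
      rw [pow_succ', Matrix.mul_assoc]
      calc _ ≤ ‖B‖ * ‖B ^ m * (1 - E)‖ := norm_mul_le _ _
        _ ≤ (1 - δ) * ((1 - δ) ^ m * ‖1 - E‖) := by gcongr
        _ = _ := by ring
  have hbound : ∀ n : ℕ, ‖K ^ n - E‖ ≤ (1 - δ) ^ (n / L) * ‖1 - E‖ := by
    intro n
    have : K ^ n - E = K ^ (n % L) * (B ^ (n / L) * (1 - E)) := by
      rw [← hpow, ← pow_mul, ← Matrix.mul_assoc, ← pow_add, Nat.mod_add_div, Matrix.mul_sub,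
        hKnE, Matrix.mul_one]
    rw [this]
    calc _ ≤ ‖K ^ (n % L)‖ * ‖B ^ (n / L) * (1 - E)‖ := norm_mul_le _ _
      _ ≤ 1 * ((1 - δ) ^ (n / L) * ‖1 - E‖) := by
        gcongr
        · exact hKnorm _
        · exact hBp _
      _ = _ := one_mul _
  have hentry : ∀ A : Matrix S S ℝ, |A s t| ≤ ‖A‖ := by
    intro A
    rw [Matrix.linfty_opNorm_def]
    have h2 : ‖A s t‖₊ ≤ Finset.univ.sup fun a => ∑ b, ‖A a b‖₊ :=
      (Finset.single_le_sum (f := fun b => ‖A s b‖₊) (fun _ _ => zero_le)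
        (Finset.mem_univ t)).trans
        (Finset.le_sup (f := fun a => ∑ b, ‖A a b‖₊) (Finset.mem_univ s))
    have h3 := NNReal.coe_le_coe.2 h2
    simpa using h3
  have hlim : Filter.Tendsto (fun n : ℕ => (1 - δ) ^ (n / L) * ‖1 - E‖) Filter.atTop
      (nhds 0) := by
    have h4 := ((tendsto_pow_atTop_nhds_zero_of_lt_one hδ1 (by linarith)).comp
      (Nat.tendsto_div_const_atTop hL0.ne')).mul_const ‖1 - E‖
    simpa using h4
  rw [tendsto_iff_norm_sub_tendsto_zero]
  refine squeeze_zero (fun _ => norm_nonneg _) (fun n => ?_) hlim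
  exact (hentry (K ^ n - E)).trans (hbound n)

/-! ### The skew product chain -/

/-- Transition matrix of the pair (current state, accumulated phase in `ZMod M`): a step from `k`
to `j` has probability `p j k` and adds `f j k` to the phase. Rows index the departure. -/
noncomputable def skewKernel {r M : ℕ} (p : Fin r → Fin r → ℝ) (f : Fin r → Fin r → ZMod M) :
    Matrix (Fin r × ZMod M) (Fin r × ZMod M) ℝ :=
  Matrix.of fun s t => if t.2 = s.2 + f t.1 s.1 then p t.1 s.1 else 0

theorem skewKernel_sum {r M : ℕ} [NeZero M] (p : Fin r → Fin r → ℝ)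
    (f : Fin r → Fin r → ZMod M) (s : Fin r × ZMod M) (G : Fin r × ZMod M → ℝ) :
    ∑ t, skewKernel p f s t * G t = ∑ j, p j s.1 * G (j, s.2 + f j s.1) := by
  rw [Fintype.sum_prod_type]
  simp [skewKernel]

/-- Sums over trajectories are expectations under powers of the skew product kernel; the initial
phase `a` is allowed to depend on the initial state so that the induction on `n` closes. -/
theorem sum_paths_eq {r M : ℕ} [NeZero M] (p : Fin r → Fin r → ℝ)
    (f : Fin r → Fin r → ZMod M) (n : ℕ) :
    ∀ (a : Fin r → ZMod M) (G : Fin r → Fin r × ZMod M → ℝ),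
    ∑ x : Fin (n + 1) → Fin r, (∏ t : Fin n, p (x t.succ) (x t.castSucc)) *
      G (x 0) (x (Fin.last n), a (x 0) + ∑ t : Fin n, f (x t.succ) (x t.castSucc)) =
    ∑ j, ∑ s, (skewKernel p f ^ n) (j, a j) s * G j s := by
  induction n with
  | zero =>
    intro a G
    rw [← (Equiv.funUnique (Fin 1) (Fin r)).symm.sum_comp]
    simp [Matrix.one_apply]
  | succ n ih =>
    intro a G
    rw [← (Fin.consEquiv fun _ : Fin (n + 2) => Fin r).sum_comp, Fintype.sum_prod_type]
    refine Finset.sum_congr rfl fun j _ => ?_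
    have h := ih (fun j' => a j + f j' j) (fun j' s => p j' j * G j s)
    have hrhs : ∑ s, (skewKernel p f ^ (n + 1)) (j, a j) s * G j s =
        ∑ j', ∑ s, (skewKernel p f ^ n) (j', a j + f j' j) s * (p j' j * G j s) := by
      simp only [pow_succ', Matrix.mul_apply, skewKernel_sum]
      simp only [Finset.sum_mul]
      rw [Finset.sum_comm]
      refine Finset.sum_congr rfl fun j' _ => Finset.sum_congr rfl fun s _ => by ring
    rw [hrhs, ← h]
    refine Finset.sum_congr rfl fun y _ => ?_
    simp only [Fin.consEquiv, Equiv.coe_fn_mk, Fin.prod_univ_succ, Fin.sum_univ_succ,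
      Fin.cons_succ, Fin.cons_zero, Fin.castSucc_zero, ← Fin.succ_castSucc, ← Fin.succ_last,
      add_assoc]
    ring

theorem skewKernel_nonneg {r M : ℕ} (p : Fin r → Fin r → ℝ)
    (f : Fin r → Fin r → ZMod M) (hp : ∀ j k, 0 < p j k) (s t) : 0 ≤ skewKernel p f s t := by
  simp only [skewKernel, Matrix.of_apply]
  split_ifs
  · exact (hp _ _).le
  · exact le_rfl

theorem skewKernel_pow_nonneg {r M : ℕ} [NeZero M] (p : Fin r → Fin r → ℝ)
    (f : Fin r → Fin r → ZMod M) (hp : ∀ j k, 0 < p j k) (n : ℕ) (s t) :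
    0 ≤ (skewKernel p f ^ n) s t := by
  induction n generalizing s t with
  | zero => simp only [pow_zero, Matrix.one_apply]; split_ifs <;> norm_num
  | succ n ih =>
    rw [pow_succ, Matrix.mul_apply]
    exact Finset.sum_nonneg fun c _ => mul_nonneg (ih _ _) (skewKernel_nonneg p f hp _ _)

theorem skewKernel_pow_trans {r M : ℕ} [NeZero M] (p : Fin r → Fin r → ℝ)
    (f : Fin r → Fin r → ZMod M) (hp : ∀ j k, 0 < p j k) (m n : ℕ) (s u t)
    (h1 : 0 < (skewKernel p f ^ m) s u) (h2 : 0 < (skewKernel p f ^ n) u t) :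
    0 < (skewKernel p f ^ (m + n)) s t := by
  rw [pow_add, Matrix.mul_apply]
  exact Finset.sum_pos' (fun c _ => mul_nonneg (skewKernel_pow_nonneg p f hp _ _ _)
    (skewKernel_pow_nonneg p f hp _ _ _)) ⟨u, Finset.mem_univ u, mul_pos h1 h2⟩

/-- If the phase increments out of state `0` vanish and the increments generate `ZMod M`, the skew
product chain is primitive. The phases attainable along loops at `0` form a submonoid of a finite
group, hence a subgroup, and it contains every increment; the free loop `0 → 0` pads all the
loops to a common length. -/
theorem skewKernel_primitive {r M : ℕ} [NeZero M] (p : Fin (r + 2) → Fin (r + 2) → ℝ)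
    (f : Fin (r + 2) → Fin (r + 2) → ZMod M) (hp : ∀ j k, 0 < p j k)
    (hf0 : ∀ j, f j 0 = 0)
    (hgen : ∀ H : AddSubgroup (ZMod M), (∀ j k, f j k ∈ H) → H = ⊤) :
    ∃ L : ℕ, 0 < L ∧ ∀ s t, 0 < (skewKernel p f ^ L) s t := by
  have hstep : ∀ (k j : Fin (r + 2)) (a : ZMod M),
      0 < (skewKernel p f ^ 1) (k, a) (j, a + f j k) := by
    intro k j a
    simp [skewKernel, hp]
  have hout : ∀ (j : Fin (r + 2)) (a : ZMod M), 0 < (skewKernel p f ^ 1) (0, a) (j, a) := by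
    intro j a
    simpa [hf0] using hstep 0 j a
  let D : AddSubmonoid (ZMod M) :=
    { carrier := {b | ∃ n : ℕ, ∀ a, 0 < (skewKernel p f ^ n) (0, a) (0, a + b)}
      zero_mem' := ⟨0, fun a => by simp⟩
      add_mem' := by
        rintro b c ⟨m, hm⟩ ⟨n, hn⟩
        refine ⟨m + n, fun a => ?_⟩
        have := skewKernel_pow_trans p f hp m n _ _ _ (hm a) (hn (a + b))
        rwa [add_assoc] at this }
  let H : AddSubgroup (ZMod M) :=
    { D with
      neg_mem' := by
        intro b hb
        have hMpos : 0 < M := Nat.pos_of_ne_zero (NeZero.ne M)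
        have h2 : -b = (M - 1) • b := by
          rw [nsmul_eq_mul, Nat.cast_sub hMpos]
          simp
        rw [h2]
        exact D.nsmul_mem hb _ }
  have hf1 : ∀ j, f 0 j ∈ H := by
    intro j
    exact ⟨1 + 1, fun a => skewKernel_pow_trans p f hp 1 1 _ _ _ (hout j a) (hstep j 0 a)⟩
  have hfH : ∀ j k, f j k ∈ H := by
    intro j k
    have h1 : f j k + f 0 j ∈ H := by
      refine ⟨1 + 1 + 1, fun a => ?_⟩
      have := skewKernel_pow_trans p f hp (1 + 1) 1 _ _ _
        (skewKernel_pow_trans p f hp 1 1 _ _ _ (hout k a) (hstep k j a)) (hstep j 0 (a + f j k))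
      rwa [add_assoc (a : ZMod M)] at this
    simpa using H.sub_mem h1 (hf1 j)
  have hall : ∀ b : ZMod M, ∃ n : ℕ, ∀ a, 0 < (skewKernel p f ^ n) (0, a) (0, a + b) := by
    intro b
    have : b ∈ H := by rw [hgen H hfH]; trivial
    exact this
  choose n hn using hall
  have hloop : ∀ (m : ℕ) (a : ZMod M), 0 < (skewKernel p f ^ m) (0, a) (0, a) := by
    intro m a
    induction m with
    | zero => simp
    | succ m ih => exact skewKernel_pow_trans p f hp m 1 _ _ _ ih (hout 0 a)
  set N := ∑ b, n b with hN
  have hNb : ∀ a b : ZMod M, 0 < (skewKernel p f ^ N) (0, a) (0, a + b) := by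
    intro a b
    have hle : n b ≤ N := Finset.single_le_sum (fun _ _ => Nat.zero_le _) (Finset.mem_univ b)
    have := skewKernel_pow_trans p f hp (N - n b) (n b) _ _ _ (hloop _ a) (hn b a)
    rwa [Nat.sub_add_cancel hle] at this
  refine ⟨1 + N + 1, by omega, ?_⟩
  rintro ⟨k, a⟩ ⟨j, b⟩
  refine skewKernel_pow_trans p f hp (1 + N) 1 _ (0, b) _ ?_ (hout j b)
  refine skewKernel_pow_trans p f hp 1 N _ _ _ (hstep k 0 a) ?_
  simpa using hNb (a + f 0 k) (b - (a + f 0 k))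

/-! ### The function `vrho` on the lattice -/

theorem vrho_nonneg (u : ℝ) : 0 ≤ vrho u := sub_nonneg.2 (Int.le_ceil u)

theorem vrho_lt_one (u : ℝ) : vrho u < 1 := by
  have := Int.ceil_lt_add_one u
  unfold vrho
  linarith

/-- `vrho ((z + N) / M)` depends on the integer `N` only through its residue modulo `M`. -/
theorem vrho_lattice (M : ℕ) [NeZero M] (z : ℝ) (N : ℤ) :
    vrho ((z + N) / M) = (vrho z + ((-((⌈z⌉ : ZMod M) + (N : ZMod M))).val : ℝ)) / M := by
  have hM : (0 : ℝ) < M := Nat.cast_pos.2 (Nat.pos_of_ne_zero (NeZero.ne M))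
  set w : ℕ := (-((⌈z⌉ : ZMod M) + (N : ZMod M))).val with hw
  have hlt : w < M := ZMod.val_lt _
  have hdvd : (M : ℤ) ∣ ⌈z⌉ + N + w := by
    rw [← ZMod.intCast_zmod_eq_zero_iff_dvd]
    push_cast
    rw [hw, ZMod.natCast_zmod_val]
    ring
  obtain ⟨q, hq⟩ := hdvd
  have hq' : (⌈z⌉ : ℝ) + N + w = M * q := by exact_mod_cast hq
  have hlt' : (w : ℝ) + 1 ≤ M := by exact_mod_cast hlt
  have h0 := vrho_nonneg z
  have h1 := vrho_lt_one z
  have hw0 : (0 : ℝ) ≤ w := Nat.cast_nonneg w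
  have hkey : (z + N) / M = q - (vrho z + w) / M := by
    unfold vrho
    field_simp
    linarith
  have hceil : ⌈(z + N) / M⌉ = q := by
    rw [Int.ceil_eq_iff, hkey]
    have h2 : (vrho z + w) / M < 1 := by
      rw [div_lt_one hM]; linarith
    have h3 : 0 ≤ (vrho z + w) / M := by positivity
    constructor <;> linarith
  rw [vrho, hceil, hkey]
  ring

/-- Averaging over a uniform phase. -/
theorem lattice_average (M : ℕ) [NeZero M] (ρ : ℝ) (c : ZMod M) :
    ∑ b : ZMod M, (ρ + ((-(c + b)).val : ℝ)) / M = ρ + ((M : ℝ) - 1) / 2 := by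
  have hM : (M : ℝ) ≠ 0 := Nat.cast_ne_zero.2 (NeZero.ne M)
  have h1 : ∑ b : ZMod M, ((-(c + b)).val : ℝ) = ∑ b : ZMod M, (b.val : ℝ) :=
    Equiv.sum_comp ((Equiv.addLeft c).trans (Equiv.neg _)) (fun b : ZMod M => (b.val : ℝ))
  have h2 : ∑ b : ZMod M, (b.val : ℝ) = (M : ℝ) * ((M : ℝ) - 1) / 2 := by
    obtain ⟨m, rfl⟩ := Nat.exists_eq_succ_of_ne_zero (NeZero.ne M)
    have h3 : ∑ b : ZMod (m + 1), (b.val : ℝ) = ∑ i ∈ Finset.range (m + 1), (i : ℝ) :=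
      Fin.sum_univ_eq_sum_range (fun i => (i : ℝ)) (m + 1)
    have h4 := Finset.sum_range_id_mul_two (m + 1)
    have h5 : (∑ i ∈ Finset.range (m + 1), (i : ℝ)) * 2 = ((m : ℝ) + 1) * m := by
      rw [Nat.add_sub_cancel] at h4
      have h6 := congrArg (Nat.cast : ℕ → ℝ) h4
      push_cast at h6
      exact h6
    change ∑ b : ZMod (m + 1), (b.val : ℝ) = _
    rw [h3]
    push_cast
    linarith
  rw [← Finset.sum_div, Finset.sum_add_distrib, h1, h2]
  simp only [Finset.sum_const, Finset.card_univ, ZMod.card, nsmul_eq_mul]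
  field_simp

/-! ### The redundancy of the Shannon code -/

/-- The telescoping identity: up to the boundary terms in `zetaJK`, the code length is a sum of
the multiples `F` of `1 / M`. -/
theorem neg_logb_markovProb {r M n : ℕ} (hM : 0 < M) (p : Fin (r + 2) → Fin (r + 2) → ℝ)
    (pinit : Fin (r + 2) → ℝ) (hp : ∀ j k, 0 < p j k) (hi : ∀ j, 0 < pinit j)
    (F : Fin (r + 2) → Fin (r + 2) → ℤ)
    (hF : ∀ j k, (M : ℝ) * (alphaJK p j k - alphaJK p j 0) = F j k)
    (x : Fin (n + 1) → Fin (r + 2)) :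
    -Real.logb 2 (markovProb pinit p x) =
      (zetaJK p pinit M (x 0) (x (Fin.last n)) (n + 1)
        + ((∑ t : Fin n, F (x t.succ) (x t.castSucc) : ℤ) : ℝ)) / M := by
  have hMR : (M : ℝ) ≠ 0 := by positivity
  have hlog : ∀ j k, alphaJK p j k = Real.logb 2 (p j 0) + Real.logb 2 (p j j)
      - (Real.logb 2 (p k 0) + Real.logb 2 (p j k)) := by
    intro j k
    have h1 := (hp j 0).ne'
    have h2 := (hp j j).ne'
    have h3 := (hp k 0).ne'
    have h4 := (hp j k).ne'
    rw [alphaJK, Real.logb_div (mul_ne_zero h1 h2) (mul_ne_zero h3 h4), Real.logb_mul h1 h2,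
      Real.logb_mul h3 h4]
  have hFj : ∀ j k, Real.logb 2 (p j k) = -(F j k : ℝ) / M + Real.logb 2 (p 0 0)
      + (Real.logb 2 (p j 0) - Real.logb 2 (p k 0)) := by
    intro j k
    rw [← hF, hlog, hlog]
    field_simp
    ring
  have htel : ∑ t : Fin n, (Real.logb 2 (p (x t.succ) 0) - Real.logb 2 (p (x t.castSucc) 0)) =
      Real.logb 2 (p (x (Fin.last n)) 0) - Real.logb 2 (p (x 0) 0) := by
    have h1 := Fin.sum_univ_succ (fun t : Fin (n + 1) => Real.logb 2 (p (x t) 0))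
    have h2 := Fin.sum_univ_castSucc (fun t : Fin (n + 1) => Real.logb 2 (p (x t) 0))
    rw [Finset.sum_sub_distrib]
    linarith
  rw [markovProb, Real.logb_mul (hi _).ne' (Finset.prod_ne_zero_iff.2 fun t _ => (hp _ _).ne'),
    Real.logb_prod _ _ (fun t _ => (hp _ _).ne')]
  simp only [hFj (x (Fin.succ _)) (x (Fin.castSucc _))]
  rw [Finset.sum_add_distrib, htel, Finset.sum_add_distrib, ← Finset.sum_div,
    Finset.sum_neg_distrib, zetaJK]
  push_cast
  simp only [Finset.sum_const, Finset.card_univ, Fintype.card_fin, nsmul_eq_mul]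
  field_simp
  ring

open scoped Classical in
theorem shannon_redundancy_rational_case (r : ℕ)
    (p : Fin (r + 2) → Fin (r + 2) → ℝ) (pinit : Fin (r + 2) → ℝ)
    (hppos : ∀ j k, 0 < p j k) (hpsum : ∀ k, ∑ j, p j k = 1)
    (hinitpos : ∀ j, 0 < pinit j) (hinit1 : ∑ j, pinit j = 1)
    (π : Fin (r + 2) → ℝ) (hπ0 : ∀ j, 0 ≤ π j)
    (hπstat : ∀ j, π j = ∑ k, p j k * π k) (hπ1 : ∑ j, π j = 1)
    (hrat : ∀ j k, ∃ q : ℚ, alphaJK p j k = (q : ℝ))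
    (M : ℕ)
    (hM : IsLeast {m : ℕ | 0 < m ∧ ∀ j k, ∃ z : ℤ, (m : ℝ) * alphaJK p j k = (z : ℝ)} M) :
    ∃ ξ ε : ℕ → ℝ, (∀ n, 0 < ξ n) ∧
      Filter.Tendsto ξ Filter.atTop (nhds 0) ∧
      Filter.Tendsto ε Filter.atTop (nhds 0) ∧
      ∀ n : ℕ,
        shannonRed (r + 2) n pinit p ≤
          (1 / 2 * (1 - 1 / (M : ℝ))
            + (1 / (M : ℝ)) * ∑ j, ∑ k,
                pinit j * π k * vrho (zetaJK p pinit M j k (n + 1)))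
          + (1 / (M : ℝ)) * (∑ j, ∑ k, pinit j * π k *
              (if vrho (zetaJK p pinit M j k (n + 1)) ∈ Set.Ioo (ξ n) (1 - ξ n)
                then (0 : ℝ) else 1))
          + ε n ∧
        shannonRed (r + 2) n pinit p ≥
          (1 / 2 * (1 - 1 / (M : ℝ))
            + (1 / (M : ℝ)) * ∑ j, ∑ k,
                pinit j * π k * vrho (zetaJK p pinit M j k (n + 1)))
          - (1 / (M : ℝ)) * (∑ j, ∑ k, pinit j * π k *
              (if vrho (zetaJK p pinit M j k (n + 1)) ∈ Set.Ioo (ξ n) (1 - ξ n)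
                then (0 : ℝ) else 1))
          - ε n := by
  classical
  have hMpos : 0 < M := hM.1.1
  have : NeZero M := ⟨hMpos.ne'⟩
  have hMR : (M : ℝ) ≠ 0 := by positivity
  choose A hA using hM.1.2
  set F : Fin (r + 2) → Fin (r + 2) → ℤ := fun j k => A j k - A j 0 with hFdef
  have hF : ∀ j k, (M : ℝ) * (alphaJK p j k - alphaJK p j 0) = F j k := by
    intro j k
    rw [mul_sub, hA, hA, hFdef]
    push_cast
    ring
  set f : Fin (r + 2) → Fin (r + 2) → ZMod M := fun j k => (F j k : ZMod M) with hf
  -- Minimality of `M` forces the increments to generate `ZMod M`: the order `c` of a subgroup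
  -- containing them satisfies `c * (α_{jk} - α_{j0}) ∈ ℤ`, and `α_{jj} = 0`.
  have hgen : ∀ H : AddSubgroup (ZMod M), (∀ j k, f j k ∈ H) → H = ⊤ := by
    intro H hH
    have hdiff : ∀ j k, ∃ z : ℤ, (Nat.card H : ℝ) * (alphaJK p j k - alphaJK p j 0) = z := by
      intro j k
      have h1 : Nat.card H • (⟨f j k, hH j k⟩ : H) = 0 := card_nsmul_eq_zero'
      have h2 : ((Nat.card H * F j k : ℤ) : ZMod M) = 0 := by
        have h3 := congrArg Subtype.val h1
        rw [AddSubgroup.coe_nsmul, nsmul_eq_mul] at h3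
        push_cast
        exact h3
      rw [ZMod.intCast_zmod_eq_zero_iff_dvd] at h2
      obtain ⟨z, hz⟩ := h2
      refine ⟨z, mul_left_cancel₀ hMR ?_⟩
      have hz' : (Nat.card H : ℝ) * F j k = M * z := by exact_mod_cast hz
      rw [← hz', ← hF]
      ring
    have hjj : ∀ j, alphaJK p j j = 0 := by
      intro j
      rw [alphaJK, div_self (mul_pos (hppos _ _) (hppos _ _)).ne', Real.logb_one]
    have hle : M ≤ Nat.card H := by
      refine hM.2 ⟨Nat.card_pos, fun j k => ?_⟩
      obtain ⟨z, hz⟩ := hdiff j k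
      obtain ⟨w, hw⟩ := hdiff j j
      rw [hjj] at hw
      refine ⟨z - w, ?_⟩
      push_cast
      rw [← hz, ← hw]
      ring
    apply AddSubgroup.eq_top_of_le_card
    rwa [Nat.card_zmod]
  obtain ⟨L, hL0, hL⟩ := skewKernel_primitive p f hppos (fun j => by simp [hf, hFdef]) hgen
  set v : Fin (r + 2) × ZMod M → ℝ := fun s => π s.1 / M with hv
  have hconv : ∀ s t, Filter.Tendsto (fun n : ℕ => (skewKernel p f ^ n) s t) Filter.atTop
      (nhds (v t)) := by
    refine stochastic_pow_tendsto _ (skewKernel_nonneg p f hppos) ?_ v ?_ ?_ ?_ L hL0 hL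
    · intro s
      simpa [hpsum] using skewKernel_sum p f s (fun _ => 1)
    · intro s
      exact div_nonneg (hπ0 _) (Nat.cast_nonneg _)
    · rw [Fintype.sum_prod_type]
      simp only [hv, Finset.sum_const, Finset.card_univ, ZMod.card, nsmul_eq_mul,
        mul_div_cancel₀ _ hMR, hπ1]
    · rintro ⟨j, b⟩
      rw [Fintype.sum_prod_type]
      simp only [hv, skewKernel, Matrix.of_apply, mul_ite, mul_zero]
      have hone : ∀ k, (∑ a : ZMod M, if b = a + f j k then π k / M * p j k else 0)
          = p j k * π k / M := by
        intro k
        have : ∀ a : ZMod M, (b = a + f j k) ↔ (a = b - f j k) := fun a =>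
          ⟨fun h => by rw [h]; ring, fun h => by rw [h]; ring⟩
        simp only [this, Finset.sum_ite_eq', Finset.mem_univ, if_true]
        ring
      simp only [hone]
      rw [← Finset.sum_div, ← hπstat]
  let G : ℕ → Fin (r + 2) → Fin (r + 2) × ZMod M → ℝ := fun n j s =>
    (vrho (zetaJK p pinit M j s.1 (n + 1)) +
      ((-((⌈zetaJK p pinit M j s.1 (n + 1)⌉ : ZMod M) + s.2)).val : ℝ)) / M
  have hG : ∀ n j s, |G n j s| ≤ 1 := by
    intro n j s
    have h0 := vrho_nonneg (zetaJK p pinit M j s.1 (n + 1))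
    have h1 := vrho_lt_one (zetaJK p pinit M j s.1 (n + 1))
    have h2 : ((-((⌈zetaJK p pinit M j s.1 (n + 1)⌉ : ZMod M) + s.2)).val : ℝ) + 1 ≤ M := by
      exact_mod_cast ZMod.val_lt _
    have h3 : (0 : ℝ) < M := by positivity
    have h4 : 0 ≤ G n j s := by positivity
    rw [abs_of_nonneg h4]
    refine (div_le_one h3).2 ?_
    linarith
  have hR : ∀ n, shannonRed (r + 2) n pinit p =
      ∑ j, ∑ s, (skewKernel p f ^ n) (j, 0) s * (pinit j * G n j s) := by
    intro n
    rw [← sum_paths_eq p f n (fun _ => 0) (fun j s => pinit j * G n j s), shannonRed]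
    refine Finset.sum_congr rfl fun x _ => ?_
    rw [neg_logb_markovProb hMpos p pinit hppos hinitpos F hF x, vrho_lattice]
    simp only [markovProb, G, hf, Int.cast_sum, zero_add]
    ring
  set Om : ℕ → ℝ := fun n => 1 / 2 * (1 - 1 / (M : ℝ))
      + (1 / (M : ℝ)) * ∑ j, ∑ k, pinit j * π k * vrho (zetaJK p pinit M j k (n + 1)) with hOm
  have hOmG : ∀ n, Om n = ∑ j, ∑ s, v s * (pinit j * G n j s) := by
    intro n
    have h1 : ∀ j, ∑ s, v s * (pinit j * G n j s) =
        ∑ k, (pinit j * π k * (1 / 2 * (1 - 1 / (M : ℝ))) +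
          1 / (M : ℝ) * (pinit j * π k * vrho (zetaJK p pinit M j k (n + 1)))) := by
      intro j
      rw [Fintype.sum_prod_type]
      refine Finset.sum_congr rfl fun k _ => ?_
      have h2 := lattice_average M (vrho (zetaJK p pinit M j k (n + 1)))
        (⌈zetaJK p pinit M j k (n + 1)⌉ : ZMod M)
      simp only [hv, G]
      simp only [← Finset.mul_sum]
      rw [h2]
      field_simp
      ring
    simp only [h1, Finset.sum_add_distrib, ← Finset.sum_mul, ← Finset.mul_sum, hπ1, hinit1, hOm]
    ring
  have hlim : Filter.Tendsto (fun n => |shannonRed (r + 2) n pinit p - Om n|) Filter.atTop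
      (nhds 0) := by
    have hb : Filter.Tendsto
        (fun n => ∑ j, ∑ s, |(skewKernel p f ^ n) (j, 0) s - v s| * pinit j)
        Filter.atTop (nhds 0) := by
      have h1 : Filter.Tendsto
          (fun n => ∑ j, ∑ s, |(skewKernel p f ^ n) (j, 0) s - v s| * pinit j)
          Filter.atTop (nhds (∑ j, ∑ s, |v s - v s| * pinit j)) :=
        tendsto_finsetSum _ fun j _ => tendsto_finsetSum _ fun s _ =>
          ((((hconv (j, 0) s).sub_const (v s)).abs).mul_const _)
      simpa using h1
    refine squeeze_zero (fun _ => abs_nonneg _) (fun n => ?_) hb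
    rw [hR, hOmG, ← Finset.sum_sub_distrib]
    refine (Finset.abs_sum_le_sum_abs _ _).trans (Finset.sum_le_sum fun j _ => ?_)
    rw [← Finset.sum_sub_distrib]
    refine (Finset.abs_sum_le_sum_abs _ _).trans (Finset.sum_le_sum fun s _ => ?_)
    rw [← sub_mul, abs_mul, abs_mul, abs_of_pos (hinitpos j)]
    refine mul_le_mul_of_nonneg_left ?_ (abs_nonneg _)
    exact mul_le_of_le_one_right (hinitpos j).le (hG n j s)
  refine ⟨fun n => 1 / ((n : ℝ) + 1), fun n => |shannonRed (r + 2) n pinit p - Om n|,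
    fun n => by positivity, tendsto_one_div_add_atTop_nhds_zero_nat, hlim, fun n => ?_⟩
  -- The indicator terms are only needed to be nonnegative.
  have hind : ∀ ξ : ℝ, 0 ≤ (1 / (M : ℝ)) * (∑ j, ∑ k, pinit j * π k *
      (if vrho (zetaJK p pinit M j k (n + 1)) ∈ Set.Ioo ξ (1 - ξ) then (0 : ℝ) else 1)) := by
    intro ξ
    refine mul_nonneg (by positivity) (Finset.sum_nonneg fun j _ => Finset.sum_nonneg fun k _ =>
      mul_nonneg (mul_nonneg (hinitpos j).le (hπ0 k)) ?_)
    split_ifs <;> norm_num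
  have h1 := hind (1 / ((n : ℝ) + 1))
  have h2 := abs_le.1 (le_refl |shannonRed (r + 2) n pinit p - Om n|)
  have h3 : Om n = 1 / 2 * (1 - 1 / (M : ℝ)) + (1 / (M : ℝ)) *
    ∑ j, ∑ k, pinit j * π k * vrho (zetaJK p pinit M j k (n + 1)) := rfl
  rw [← h3]
  constructor
  · linarith [h2.2]
  · linarith [h2.1]
end

section
/- Let F = {f_{kj}} and G = {g_{kj}} be r×r matrices, where F is real, non-negative and irreducible, G is complex, and f_{kj} ≥ |g_{kj}| for all k,j ∈ {1,…,r}. Then the spectral radius satisfies ρ(G) ≤ ρ(F), with equality ρ(G) = ρ(F) if and only if there exist real numbers s and w₁,…,w_r such that G = e^{2πis}·D·F·D^{−1}, where D = diag(e^{2πiw₁},…,e^{2πiw_r}). -/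
/-!
STATEMENT 4 (Lemma 1): If F is a real non-negative irreducible r×r matrix,
G a complex r×r matrix with f_{kj} ≥ |g_{kj}| for all k,j, then ρ(G) ≤ ρ(F),
with equality iff G = e^{2πis}·D·F·D^{−1} for some reals s, w₁,…,w_r, where
D = diag(e^{2πiw₁},…,e^{2πiw_r}) (whose inverse is diag(e^{−2πiw₁},…,e^{−2πiw_r})).
-/

/-- Spectral radius: supremum of the moduli of the eigenvalues. -/
noncomputable def specRad {r : ℕ} (A : Matrix (Fin r) (Fin r) ℂ) : ℝ :=
  sSup {x : ℝ | ∃ lam : ℂ,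
    (∃ v : Fin r → ℂ, v ≠ 0 ∧ A.mulVec v = lam • v) ∧ x = ‖lam‖}

/-!
The proof goes through the Collatz–Wielandt characterization of the Perron root. Let `ρ` be the
largest `t ≥ 0` such that `t y ≤ F y` entrywise for some non-zero `y ≥ 0`; it exists by compactness
of the simplex. Irreducibility provides an entrywise positive matrix `P`, a sum of powers of `F`.
If `t y ≤ F y` but `F y ≠ t y`, then `z = P y` satisfies `t z < F z` strictly in every entry, so `t`
can be increased (`exists_improvement`). Hence any `y` realizing `ρ` is an eigenvector of `F`, and
it is positive because `P y` is both positive and a multiple of `y` (`exists_perron`).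

If `G v = λ v`, the triangle inequality gives `|λ| |v| ≤ F |v|`, so `|λ| ≤ ρ`; taking `G = F` shows
that `ρ` is the spectral radius of `F`. If `|λ| = ρ`, then `|v|` is a positive eigenvector of `F`
for `ρ`. Writing `v = D |v|` and `λ = e^{iθ} ρ`, the matrix `H = e^{-iθ} D⁻¹ G D` satisfies
`|H| ≤ F` and `H |v| = F |v|`; comparing real parts and using `|v| > 0` gives `H = F`.
Conversely, `e^{iθ} D F D⁻¹` has the eigenvalue `e^{iθ} ρ`, with eigenvector `D x` for the Perron
vector `x`.
-/

open Matrix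

/-- An entrywise positive matrix that is a sum of powers of `F`: it commutes with `F` and keeps
each eigenvector of `F` on its own line. -/
lemma exists_pos_commuting {r : ℕ} (F : Matrix (Fin r) (Fin r) ℝ)
    (hF0 : ∀ k j, 0 ≤ F k j)
    (hFirr : ∀ k j : Fin r, ∃ l : ℕ, 0 < l ∧ 0 < (F ^ l) k j) :
    ∃ P : Matrix (Fin r) (Fin r) ℝ, (∀ k j, 0 < P k j) ∧ P * F = F * P ∧
      ∀ (x : Fin r → ℝ) (t : ℝ), F *ᵥ x = t • x → ∃ c : ℝ, P *ᵥ x = c • x := by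
  choose l hl hpos using hFirr
  have hpow : ∀ (n : ℕ) (k j : Fin r), 0 ≤ (F ^ n) k j := by
    intro n
    induction n with
    | zero =>
      intro k j
      rw [pow_zero, Matrix.one_apply]
      split_ifs <;> norm_num
    | succ n ih =>
      intro k j
      rw [pow_succ, Matrix.mul_apply]
      exact Finset.sum_nonneg fun i _ => mul_nonneg (ih k i) (hF0 i j)
  refine ⟨∑ q : Fin r × Fin r, F ^ l q.1 q.2, ?_, ?_, ?_⟩
  · intro k j
    rw [Matrix.sum_apply]
    exact Finset.sum_pos' (fun q _ => hpow _ _ _) ⟨(k, j), Finset.mem_univ _, hpos k j⟩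
  · rw [Finset.sum_mul, Finset.mul_sum]
    exact Finset.sum_congr rfl fun q _ => (pow_succ _ _).symm.trans (pow_succ' _ _)
  · intro x t hx
    have hn : ∀ n : ℕ, (F ^ n) *ᵥ x = t ^ n • x := by
      intro n
      induction n with
      | zero => simp
      | succ n ih =>
        rw [pow_succ, ← Matrix.mulVec_mulVec, hx, Matrix.mulVec_smul, ih, smul_smul, pow_succ,
          mul_comm]
    refine ⟨∑ q : Fin r × Fin r, t ^ l q.1 q.2, ?_⟩
    rw [Matrix.sum_mulVec, Finset.sum_smul]
    exact Finset.sum_congr rfl fun q _ => hn _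

lemma mulVec_pos_of_pos {r : ℕ} (P : Matrix (Fin r) (Fin r) ℝ) (hP : ∀ k j, 0 < P k j)
    (y : Fin r → ℝ) (hy : ∀ i, 0 ≤ y i) (hy0 : y ≠ 0) (k : Fin r) : 0 < (P *ᵥ y) k := by
  obtain ⟨j, hj⟩ := Function.ne_iff.mp hy0
  exact Finset.sum_pos' (fun i _ => mul_nonneg (hP k i).le (hy i))
    ⟨j, Finset.mem_univ _, mul_pos (hP k j) (lt_of_le_of_ne (hy j) (Ne.symm hj))⟩

/-- A subinvariance `t y ≤ F y` that is not an equality leaves room for a larger `t`. -/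
lemma exists_improvement {r : ℕ} (hr : 0 < r) (F P : Matrix (Fin r) (Fin r) ℝ)
    (hP : ∀ k j, 0 < P k j) (hPF : P * F = F * P)
    (y : Fin r → ℝ) (t : ℝ) (hy : ∀ i, 0 ≤ y i) (hy0 : y ≠ 0)
    (hle : ∀ i, t * y i ≤ (F *ᵥ y) i) (hne : F *ᵥ y ≠ t • y) :
    ∃ (z : Fin r → ℝ) (t' : ℝ), (∀ i, 0 ≤ z i) ∧ z ≠ 0 ∧ t < t' ∧
      ∀ i, t' * z i ≤ (F *ᵥ z) i := by
  have : Nonempty (Fin r) := ⟨⟨0, hr⟩⟩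
  have hz : ∀ i, 0 < (P *ᵥ y) i := mulVec_pos_of_pos P hP y hy hy0
  have hstrict : ∀ i, t * (P *ᵥ y) i < (F *ᵥ (P *ᵥ y)) i := by
    intro i
    have h := mulVec_pos_of_pos P hP (F *ᵥ y - t • y)
      (fun i => by simpa using hle i) (sub_ne_zero.mpr hne) i
    rw [Matrix.mulVec_sub, Matrix.mulVec_smul, Matrix.mulVec_mulVec, hPF,
      ← Matrix.mulVec_mulVec] at h
    simpa using h
  obtain ⟨i₀, hi₀⟩ := Finite.exists_min fun i => (F *ᵥ (P *ᵥ y)) i / (P *ᵥ y) i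
  refine ⟨P *ᵥ y, (F *ᵥ (P *ᵥ y)) i₀ / (P *ᵥ y) i₀, fun i => (hz i).le, ?_, ?_, ?_⟩
  · intro h
    exact (hz i₀).ne' (congrFun h i₀)
  · rw [lt_div_iff₀ (hz i₀)]
    exact hstrict i₀
  · intro i
    rw [← le_div_iff₀ (hz i)]
    exact hi₀ i

/-- The Collatz–Wielandt maximum is attained. -/
lemma exists_max_ratio {r : ℕ} (hr : 0 < r) (F : Matrix (Fin r) (Fin r) ℝ)
    (hF0 : ∀ k j, 0 ≤ F k j) :
    ∃ (x : Fin r → ℝ) (ρ : ℝ), (∀ i, 0 ≤ x i) ∧ x ≠ 0 ∧ 0 ≤ ρ ∧ (∀ i, ρ * x i ≤ (F *ᵥ x) i) ∧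
      ∀ (y : Fin r → ℝ) (t : ℝ), (∀ i, 0 ≤ y i) → y ≠ 0 → 0 ≤ t →
        (∀ i, t * y i ≤ (F *ᵥ y) i) → t ≤ ρ := by
  have : Nonempty (Fin r) := ⟨⟨0, hr⟩⟩
  set M : ℝ := ∑ i, ∑ j, F i j
  have hbound : ∀ (y : Fin r → ℝ) (t : ℝ), y ∈ stdSimplex ℝ (Fin r) →
      (∀ i, t * y i ≤ (F *ᵥ y) i) → t ≤ M := by
    intro y t hy hle
    have hy1 : ∀ j, y j ≤ 1 := fun j => by
      rw [← hy.2]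
      exact Finset.single_le_sum (fun i _ => hy.1 i) (Finset.mem_univ j)
    calc t = ∑ i, t * y i := by rw [← Finset.mul_sum, hy.2, mul_one]
      _ ≤ ∑ i, (F *ᵥ y) i := Finset.sum_le_sum fun i _ => hle i
      _ ≤ M := by
          refine Finset.sum_le_sum fun i _ => ?_
          change ∑ j, F i j * y j ≤ ∑ j, F i j
          exact Finset.sum_le_sum fun j _ => mul_le_of_le_one_right (hF0 i j) (hy1 j)
  set K : Set ((Fin r → ℝ) × ℝ) := (stdSimplex ℝ (Fin r) ×ˢ Set.Icc 0 M) ∩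
    {p | ∀ i, p.2 * p.1 i ≤ (F *ᵥ p.1) i} with hK
  have hKc : IsCompact K := by
    refine ((isCompact_stdSimplex ℝ (Fin r)).prod isCompact_Icc).inter_right ?_
    rw [Set.ofPred_forall]
    refine isClosed_iInter fun i => isClosed_le (by fun_prop) ?_
    exact (continuous_apply i).comp (Continuous.matrix_mulVec continuous_const continuous_fst)
  have hmem : ∀ (y : Fin r → ℝ) (t : ℝ), (∀ i, 0 ≤ y i) → y ≠ 0 → 0 ≤ t →
      (∀ i, t * y i ≤ (F *ᵥ y) i) → ∃ z, (z, t) ∈ K := by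
    intro y t hy hy0 ht hle
    have hs : 0 < ∑ i, y i := by
      obtain ⟨j, hj⟩ := Function.ne_iff.mp hy0
      exact Finset.sum_pos' (fun i _ => hy i)
        ⟨j, Finset.mem_univ _, lt_of_le_of_ne (hy j) (Ne.symm hj)⟩
    have h1 : (∑ i, y i)⁻¹ • y ∈ stdSimplex ℝ (Fin r) := by
      refine ⟨fun i => mul_nonneg (inv_nonneg.mpr hs.le) (hy i), ?_⟩
      simp only [Pi.smul_apply, smul_eq_mul]
      rw [← Finset.mul_sum, inv_mul_cancel₀ hs.ne']
    have h2 : ∀ i, t * ((∑ i, y i)⁻¹ • y) i ≤ (F *ᵥ ((∑ i, y i)⁻¹ • y)) i := by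
      intro i
      rw [Matrix.mulVec_smul, Pi.smul_apply, Pi.smul_apply, smul_eq_mul, smul_eq_mul,
        mul_left_comm]
      exact mul_le_mul_of_nonneg_left (hle i) (inv_nonneg.mpr hs.le)
    exact ⟨_, ⟨h1, ht, hbound _ _ h1 h2⟩, h2⟩
  have hne : K.Nonempty := by
    obtain ⟨z, hz⟩ := hmem 1 0 (fun i => zero_le_one) one_ne_zero le_rfl fun i => by
      rw [zero_mul]
      change 0 ≤ ∑ j, F i j * 1
      exact Finset.sum_nonneg fun j _ => mul_nonneg (hF0 i j) zero_le_one
    exact ⟨_, hz⟩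
  obtain ⟨⟨x, ρ⟩, hx, hmax⟩ := hKc.exists_isMaxOn hne continuous_snd.continuousOn
  refine ⟨x, ρ, hx.1.1.1, ?_, hx.1.2.1, hx.2, ?_⟩
  · rintro rfl
    have := hx.1.1.2
    simp at this
  · intro y t hy hy0 ht hle
    obtain ⟨z, hz⟩ := hmem y t hy hy0 ht hle
    exact hmax hz

/-- The Perron root `ρ` with a positive eigenvector, its Collatz–Wielandt maximality, and the fact
that every vector attaining the maximum is a positive eigenvector. -/
lemma exists_perron {r : ℕ} (hr : 0 < r) (F : Matrix (Fin r) (Fin r) ℝ)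
    (hF0 : ∀ k j, 0 ≤ F k j)
    (hFirr : ∀ k j : Fin r, ∃ l : ℕ, 0 < l ∧ 0 < (F ^ l) k j) :
    ∃ (x : Fin r → ℝ) (ρ : ℝ), x ≠ 0 ∧ 0 ≤ ρ ∧ F *ᵥ x = ρ • x ∧
      (∀ (y : Fin r → ℝ) (t : ℝ), (∀ i, 0 ≤ y i) → y ≠ 0 → 0 ≤ t →
        (∀ i, t * y i ≤ (F *ᵥ y) i) → t ≤ ρ) ∧
      ∀ y : Fin r → ℝ, (∀ i, 0 ≤ y i) → y ≠ 0 → (∀ i, ρ * y i ≤ (F *ᵥ y) i) →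
        F *ᵥ y = ρ • y ∧ ∀ i, 0 < y i := by
  obtain ⟨P, hP, hPF, hPe⟩ := exists_pos_commuting F hF0 hFirr
  obtain ⟨x, ρ, hx, hx0, hρ, hle, hmax⟩ := exists_max_ratio hr F hF0
  have key : ∀ y : Fin r → ℝ, (∀ i, 0 ≤ y i) → y ≠ 0 → (∀ i, ρ * y i ≤ (F *ᵥ y) i) →
      F *ᵥ y = ρ • y := by
    intro y hy hy0 hle
    by_contra hne
    obtain ⟨z, t', hz, hz0, ht', hzle⟩ := exists_improvement hr F P hP hPF y ρ hy hy0 hle hne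
    exact absurd (hmax z t' hz hz0 (hρ.trans ht'.le) hzle) (not_le.mpr ht')
  refine ⟨x, ρ, hx0, hρ, key x hx hx0 hle, hmax, fun y hy hy0 hle => ⟨key y hy hy0 hle, ?_⟩⟩
  intro i
  obtain ⟨c, hc⟩ := hPe y ρ (key y hy hy0 hle)
  have h := mulVec_pos_of_pos P hP y hy hy0 i
  rw [hc] at h
  refine lt_of_le_of_ne (hy i) fun h0 => ?_
  simp [← h0] at h

/-- In positive dimension the supremum defining `specRad` is attained at an eigenvalue and is an
upper bound for the moduli of all eigenvalues, so no junk value of `sSup` is involved. -/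
lemma specRad_isGreatest {r : ℕ} (hr : 0 < r) (A : Matrix (Fin r) (Fin r) ℂ) :
    IsGreatest {x : ℝ | ∃ lam : ℂ,
      (∃ v : Fin r → ℂ, v ≠ 0 ∧ A.mulVec v = lam • v) ∧ x = ‖lam‖} (specRad A) := by
  have : Nonempty (Fin r) := ⟨⟨0, hr⟩⟩
  have hiff : ∀ lam : ℂ, (∃ v : Fin r → ℂ, v ≠ 0 ∧ A.mulVec v = lam • v) ↔
      Module.End.HasEigenvalue (Matrix.toLin' A) lam := by
    intro lam
    constructor
    · rintro ⟨v, hv0, hv⟩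
      exact Module.End.hasEigenvalue_of_hasEigenvector (x := v)
        ⟨Module.End.mem_eigenspace_iff.mpr (by simpa using hv), hv0⟩
    · intro h
      obtain ⟨v, hv⟩ := h.exists_hasEigenvector
      exact ⟨v, hv.2, by simpa using hv.apply_eq_smul⟩
  have hset : {x : ℝ | ∃ lam : ℂ,
      (∃ v : Fin r → ℂ, v ≠ 0 ∧ A.mulVec v = lam • v) ∧ x = ‖lam‖} =
      Set.image (fun lam : ℂ => ‖lam‖) {lam | Module.End.HasEigenvalue (Matrix.toLin' A) lam} := by
    ext x
    simp only [hiff, Set.mem_ofPred_eq, Set.mem_image, eq_comm]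
  have hfin : {lam | Module.End.HasEigenvalue (Matrix.toLin' A) lam}.Finite :=
    Module.End.finite_hasEigenvalue _
  have hne : {lam | Module.End.HasEigenvalue (Matrix.toLin' A) lam}.Nonempty :=
    Module.End.exists_eigenvalue _
  unfold specRad
  rw [hset]
  exact ⟨(hne.image _).csSup_mem (hfin.image _), fun y hy => le_csSup (hfin.image _).bddAbove hy⟩

/-- Moduli of an eigenvector of `G` form a subinvariant vector of a dominating matrix `F`. -/
lemma norm_eigenvector_le {r : ℕ} (F : Matrix (Fin r) (Fin r) ℝ) (G : Matrix (Fin r) (Fin r) ℂ)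
    (hdom : ∀ k j, ‖G k j‖ ≤ F k j) (v : Fin r → ℂ) (lam : ℂ) (hv : G *ᵥ v = lam • v)
    (i : Fin r) : ‖lam‖ * ‖v i‖ ≤ (F *ᵥ fun j => ‖v j‖) i := by
  have h : lam * v i = ∑ j, G i j * v j := (congrFun hv i).symm
  rw [← norm_mul, h]
  refine (norm_sum_le _ _).trans (Finset.sum_le_sum fun j _ => ?_)
  rw [norm_mul]
  exact mul_le_mul_of_nonneg_right (hdom i j) (norm_nonneg _)

/-- Polar form with the phase written as `e^{2πis}`; at `z = 0` it holds since `‖z‖ = 0`. -/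
lemma exp_arg_div (z : ℂ) :
    z = ‖z‖ * Complex.exp (2 * (Real.pi : ℂ) * Complex.I * ((z.arg / (2 * Real.pi) : ℝ) : ℂ)) := by
  have h : 2 * (Real.pi : ℂ) * Complex.I * ((z.arg / (2 * Real.pi) : ℝ) : ℂ)
      = z.arg * Complex.I := by
    have : (Real.pi : ℂ) ≠ 0 := by exact_mod_cast Real.pi_ne_zero
    push_cast
    field_simp
  rw [h, Complex.norm_mul_exp_arg_mul_I]

lemma norm_exp_two_pi (s : ℝ) : ‖Complex.exp (2 * (Real.pi : ℂ) * Complex.I * (s : ℂ))‖ = 1 := by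
  have h : 2 * (Real.pi : ℂ) * Complex.I * (s : ℂ) = ((2 * Real.pi * s : ℝ) : ℂ) * Complex.I := by
    push_cast
    ring
  rw [h, Complex.norm_exp_ofReal_mul_I]

/-- Equality case of the triangle inequality: if `|H j| ≤ f j`, the weights `u` are positive and
`∑ H j u j = ∑ f j u j`, then `H = f`. -/
lemma eq_of_sum_eq {ι : Type*} [Fintype ι] (H : ι → ℂ) (f u : ι → ℝ) (hu : ∀ j, 0 < u j)
    (hH : ∀ j, ‖H j‖ ≤ f j) (hsum : ∑ j, H j * u j = ((∑ j, f j * u j : ℝ) : ℂ)) (j : ι) :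
    H j = f j := by
  have hre : ∀ j, (H j).re ≤ f j := fun j => (Complex.re_le_norm _).trans (hH j)
  have h0 : ∑ j, (f j - (H j).re) * u j = 0 := by
    have h := congrArg Complex.re hsum
    rw [Complex.re_sum, Complex.ofReal_re] at h
    simp only [Complex.re_mul_ofReal] at h
    simp only [sub_mul, Finset.sum_sub_distrib, h, sub_self]
  have h1 := (Finset.sum_eq_zero_iff_of_nonneg fun j _ =>
    mul_nonneg (sub_nonneg.mpr (hre j)) (hu j).le).mp h0 j (Finset.mem_univ j)
  have h2 : (H j).re = f j := by
    rcases mul_eq_zero.mp h1 with h | h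
    · linarith
    · exact absurd h (hu j).ne'
  have h3 : (H j).re = ‖H j‖ := le_antisymm (Complex.re_le_norm _) (h2 ▸ hH j)
  have h4 : (H j).im = 0 := by
    have h5 := Complex.sq_norm (H j)
    rw [← h3, Complex.normSq_apply] at h5
    nlinarith
  exact Complex.ext (by simpa using h2) (by simpa using h4)

theorem spectral_radius_domination (r : ℕ) (hr : 0 < r)
    (F : Matrix (Fin r) (Fin r) ℝ) (G : Matrix (Fin r) (Fin r) ℂ)
    (hF0 : ∀ k j, 0 ≤ F k j)
    (hFirr : ∀ k j : Fin r, ∃ l : ℕ, 0 < l ∧ 0 < (F ^ l) k j)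
    (hdom : ∀ k j, ‖G k j‖ ≤ F k j) :
    specRad G ≤ specRad (F.map (fun a => (a : ℂ))) ∧
    (specRad G = specRad (F.map (fun a => (a : ℂ))) ↔
      ∃ (s : ℝ) (w : Fin r → ℝ),
        G = Complex.exp (2 * (Real.pi : ℂ) * Complex.I * (s : ℂ)) •
          (Matrix.diagonal (fun j => Complex.exp (2 * (Real.pi : ℂ) * Complex.I * ((w j : ℝ) : ℂ))) *
            F.map (fun a => (a : ℂ)) *
            Matrix.diagonal (fun j => Complex.exp (-(2 * (Real.pi : ℂ) * Complex.I * ((w j : ℝ) : ℂ)))))) := by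
  obtain ⟨x, ρ, hx0, hρ, hx, hmax, hrig⟩ := exists_perron hr F hF0 hFirr
  have hnorm0 : ∀ v : Fin r → ℂ, v ≠ 0 → (fun j => ‖v j‖) ≠ 0 := by
    intro v hv h
    exact hv (funext fun j => norm_eq_zero.mp (congrFun h j))
  have hle : ∀ A : Matrix (Fin r) (Fin r) ℂ, (∀ k j, ‖A k j‖ ≤ F k j) → specRad A ≤ ρ := by
    intro A hA
    obtain ⟨lam, ⟨v, hv0, hv⟩, h⟩ := (specRad_isGreatest hr A).1
    rw [h]
    exact hmax _ _ (fun i => norm_nonneg _) (hnorm0 v hv0) (norm_nonneg _)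
      (norm_eigenvector_le F A hA v lam hv)
  have hxC : ∀ i, ∑ j, (F i j : ℂ) * (x j : ℂ) = ρ * x i := by
    intro i
    have h : ∑ j, F i j * x j = ρ * x i := congrFun hx i
    exact_mod_cast h
  have hxC0 : ∃ j, (x j : ℂ) ≠ 0 := by
    obtain ⟨j, hj⟩ := Function.ne_iff.mp hx0
    exact ⟨j, by exact_mod_cast hj⟩
  have hFρ : specRad (F.map (fun a => (a : ℂ))) = ρ := by
    refine le_antisymm (hle _ fun k j => ?_) ((specRad_isGreatest hr _).2 ?_)
    · simp [abs_of_nonneg (hF0 k j)]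
    · refine ⟨ρ, ⟨fun j => x j, ?_, ?_⟩, ?_⟩
      · obtain ⟨j, hj⟩ := hxC0
        exact fun h => hj (congrFun h j)
      · exact funext hxC
      · simp [abs_of_nonneg hρ]
  rw [hFρ]
  refine ⟨hle G hdom, ?_, ?_⟩
  · intro hG
    obtain ⟨lam, ⟨v, hv0, hv⟩, hlam⟩ := (specRad_isGreatest hr G).1
    rw [hG] at hlam
    obtain ⟨hu, hupos⟩ := hrig (fun j => ‖v j‖) (fun i => norm_nonneg _) (hnorm0 v hv0)
      (hlam ▸ norm_eigenvector_le F G hdom v lam hv)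
    refine ⟨lam.arg / (2 * Real.pi), fun j => (v j).arg / (2 * Real.pi), ?_⟩
    have hlam' := exp_arg_div lam
    have hv' := fun j => exp_arg_div (v j)
    have hc1 := norm_exp_two_pi (lam.arg / (2 * Real.pi))
    have hd1 := fun j => norm_exp_two_pi ((v j).arg / (2 * Real.pi))
    simp only [Complex.exp_neg]
    rw [← hlam] at hlam'
    set c := Complex.exp (2 * (Real.pi : ℂ) * Complex.I * ((lam.arg / (2 * Real.pi) : ℝ) : ℂ))
      with hc
    set d : Fin r → ℂ := fun j =>
      Complex.exp (2 * (Real.pi : ℂ) * Complex.I * (((v j).arg / (2 * Real.pi) : ℝ) : ℂ)) with hd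
    have hc0 : c ≠ 0 := Complex.exp_ne_zero _
    have hd0 : ∀ j, d j ≠ 0 := fun j => Complex.exp_ne_zero _
    have hvd : ∀ j, v j = ‖v j‖ * d j := hv'
    have hdn : ∀ j, ‖d j‖ = 1 := hd1
    ext k j
    have hH := eq_of_sum_eq (fun j => c⁻¹ * (d k)⁻¹ * G k j * d j) (F k) (fun j => ‖v j‖) hupos
      (fun j => by
        rw [norm_mul, norm_mul, norm_mul, norm_inv, norm_inv, hdn, hdn, hc1]
        simpa using hdom k j)
      (by
        have h1 : ∑ j, F k j * ‖v j‖ = ρ * ‖v k‖ := congrFun hu k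
        have h2 : ∑ j, G k j * v j = lam * v k := congrFun hv k
        rw [h1]
        calc ∑ j, c⁻¹ * (d k)⁻¹ * G k j * d j * (‖v j‖ : ℂ)
            = c⁻¹ * (d k)⁻¹ * ∑ j, G k j * v j := by
              rw [Finset.mul_sum]
              refine Finset.sum_congr rfl fun j _ => ?_
              conv_rhs => rw [hvd j]
              ring
          _ = c⁻¹ * (d k)⁻¹ * ((ρ * c) * (‖v k‖ * d k)) := by rw [h2, ← hvd k, ← hlam']
          _ = ((ρ * ‖v k‖ : ℝ) : ℂ) := by
              have := hd0 k
              push_cast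
              field_simp) j
    have hdk := hd0 k
    have hdj := hd0 j
    change G k j = c * (Matrix.diagonal d * F.map (fun a => (a : ℂ)) *
      Matrix.diagonal (fun j => (d j)⁻¹)) k j
    rw [Matrix.mul_diagonal, Matrix.diagonal_mul, Matrix.map_apply, ← hH]
    field_simp
  · rintro ⟨s, w, rfl⟩
    refine le_antisymm (hle _ hdom) ((specRad_isGreatest hr _).2 ?_)
    have hs := norm_exp_two_pi s
    simp only [Complex.exp_neg]
    set c := Complex.exp (2 * (Real.pi : ℂ) * Complex.I * (s : ℂ))
    set d : Fin r → ℂ := fun j => Complex.exp (2 * (Real.pi : ℂ) * Complex.I * ((w j : ℝ) : ℂ))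
      with hd
    have hd0 : ∀ j, d j ≠ 0 := fun j => Complex.exp_ne_zero _
    refine ⟨c * ρ, ⟨fun j => d j * x j, ?_, ?_⟩, ?_⟩
    · obtain ⟨j, hj⟩ := hxC0
      exact fun h => mul_ne_zero (hd0 j) hj (congrFun h j)
    · funext k
      change ∑ j, c * (Matrix.diagonal d * F.map (fun a => (a : ℂ)) *
        Matrix.diagonal (fun j => (d j)⁻¹)) k j * (d j * x j) = c * ρ * (d k * x k)
      calc _ = ∑ j, c * d k * ((F k j : ℂ) * x j) := by
            refine Finset.sum_congr rfl fun j _ => ?_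
            have := hd0 j
            rw [Matrix.mul_diagonal, Matrix.diagonal_mul, Matrix.map_apply]
            field_simp
        _ = c * ρ * (d k * x k) := by
            rw [← Finset.mul_sum, hxC]
            ring
    · rw [norm_mul, hs, one_mul, Complex.norm_real, Real.norm_eq_abs, abs_of_nonneg hρ]
end

section
/- Let the r×r stochastic transition matrix {p(j|k)} be strictly positive and let m be a positive integer. Then ρ(A_m) = 1 if and only if ⟨m·α_{jk}⟩ = 0 for all j,k ∈ {1,…,r}. Consequently, there exists a positive integer m with ρ(A_m) = 1 if and only if all the numbers α_{jk} are rational. -/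
/-!
Write `e(x) = exp(2πi m x)` and `L(k|j) = log₂ p(k|j)`, so that `A_m` has entries
`p(k|j) e(-L(k|j))`. Its rows have absolute sum `1`, so every eigenvalue has modulus at most `1`.

Suppose `A_m v = λ v` with `|λ| = 1`. At an index `j` where `|v_j|` is maximal, `λ v_j` is a convex
combination, with positive weights, of points of modulus at most `|λ v_j|`; strict convexity of the
disc (`eq_of_weighted_sum`) makes all these points equal to `λ v_j`. Hence `|v|` is constant, and
the same argument applies at every `j`: `e(-L(k|j)) v_k = λ v_j` for all `j, k`
(`phase_of_eigen`). In `e(α_{jk})` the factors `v` and `λ` cancel, so `m α_{jk}` is an integer.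

Conversely, if all `m α_{jk}` are integers, then `v_j = e(L(j|1))` is an eigenvector for
`λ = e(-L(1|1))`, a number of modulus `1`; the case `k = 1` gives that `e(L(j|j))` does not depend
on `j`. Since there are only finitely many eigenvalues, the supremum defining the spectral radius
is attained, which makes `ρ(A_m) = 1` equivalent to the existence of an eigenvalue of modulus `1`.
The rationality criterion follows by taking for `m` a common denominator of the `α_{jk}`.
-/

/-!
STATEMENT 5: For a strictly positive r×r stochastic transition matrix and a
positive integer m: ρ(A_m) = 1 iff ⟨m·α_{jk}⟩ = 0 for all j,k; consequently
∃ positive m with ρ(A_m) = 1 iff all α_{jk} are rational.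
The alphabet is `Fin (r+2)`; state `1` of the paper is `0 : Fin (r+2)`.
-/

/-- The matrix A_m with (j,k) entry p(k|j)·exp(−2πi·m·log₂ p(k|j))
(strictly positive transition matrix). -/
noncomputable def AmatPos {r : ℕ} (p : Fin r → Fin r → ℝ) (m : ℤ) :
    Matrix (Fin r) (Fin r) ℂ :=
  Matrix.of fun j k =>
    (p k j : ℂ) *
      Complex.exp (-(2 * (Real.pi : ℂ) * Complex.I * (m : ℂ) *
        ((Real.logb 2 (p k j) : ℝ) : ℂ)))

open Finset Complex

/-- Strict convexity of the disc: a point of maximal modulus that is a convex combination with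
positive weights is equal to all the points combined. -/
lemma eq_of_weighted_sum {ι : Type*} [Fintype ι] (w : ι → ℝ) (hw : ∀ k, 0 < w k)
    (hsum : ∑ k, w k = 1) (z : ι → ℂ) (u : ℂ) (hz : ∀ k, ‖z k‖ ≤ ‖u‖)
    (h : ∑ k, (w k : ℂ) * z k = u) (k : ι) : z k = u := by
  have hre : ∀ k, (z k * (starRingEnd ℂ) u).re ≤ ‖u‖ ^ 2 := fun k => by
    calc (z k * (starRingEnd ℂ) u).re ≤ ‖z k * (starRingEnd ℂ) u‖ := Complex.re_le_norm _
      _ = ‖z k‖ * ‖u‖ := by rw [norm_mul, Complex.norm_conj]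
      _ ≤ ‖u‖ * ‖u‖ := by gcongr; exact hz k
      _ = ‖u‖ ^ 2 := by ring
  have h0 : ∑ k, w k * (‖u‖ ^ 2 - (z k * (starRingEnd ℂ) u).re) = 0 := by
    have h1 : ∑ k, w k * (z k * (starRingEnd ℂ) u).re = ‖u‖ ^ 2 := by
      have h2 : (∑ k, (w k : ℂ) * z k) * (starRingEnd ℂ) u = ((‖u‖ ^ 2 : ℝ) : ℂ) := by
        rw [h, Complex.mul_conj, Complex.normSq_eq_norm_sq]
      have h3 := congrArg Complex.re h2
      rw [Complex.ofReal_re, Finset.sum_mul, Complex.re_sum] at h3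
      rw [← h3]
      refine Finset.sum_congr rfl fun k _ => ?_
      rw [mul_assoc, Complex.re_ofReal_mul]
    simp only [mul_sub, Finset.sum_sub_distrib, ← Finset.sum_mul, hsum, h1]
    ring
  have hk := (Finset.sum_eq_zero_iff_of_nonneg (fun k _ =>
    mul_nonneg (hw k).le (sub_nonneg.2 (hre k)))).1 h0 k (mem_univ k)
  have hk' : (z k * (starRingEnd ℂ) u).re = ‖u‖ ^ 2 := by
    rcases mul_eq_zero.1 hk with h | h
    · exact absurd h (hw k).ne'
    · linarith
  have hn : ‖z k - u‖ ^ 2 ≤ 0 := by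
    rw [← Complex.normSq_eq_norm_sq, Complex.normSq_sub, hk', Complex.normSq_eq_norm_sq,
      Complex.normSq_eq_norm_sq]
    have := pow_le_pow_left₀ (norm_nonneg _) (hz k) 2
    linarith
  have : ‖z k - u‖ = 0 := by nlinarith [norm_nonneg (z k - u)]
  exact sub_eq_zero.1 (norm_eq_zero.1 this)

/-- The phase `exp(2πi m log₂ x)`. -/
noncomputable def phase (m : ℕ) (x : ℝ) : ℂ :=
  Complex.exp (((2 * Real.pi * (m * Real.logb 2 x) : ℝ) : ℂ) * Complex.I)

lemma norm_phase (m : ℕ) (x : ℝ) : ‖phase m x‖ = 1 := Complex.norm_exp_ofReal_mul_I _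

lemma phase_ne (m : ℕ) (x : ℝ) : phase m x ≠ 0 := Complex.exp_ne_zero _

lemma phase_mul (m : ℕ) {x y : ℝ} (hx : 0 < x) (hy : 0 < y) :
    phase m (x * y) = phase m x * phase m y := by
  rw [phase, phase, phase, ← Complex.exp_add, Real.logb_mul hx.ne' hy.ne']
  congr 1
  push_cast
  ring

lemma phase_div (m : ℕ) {x y : ℝ} (hx : 0 < x) (hy : 0 < y) :
    phase m (x / y) = phase m x / phase m y := by
  rw [eq_div_iff (phase_ne m y), ← phase_mul m (div_pos hx hy) hy, div_mul_cancel₀ _ hy.ne']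

lemma phase_eq_one_iff (m : ℕ) (x : ℝ) :
    phase m x = 1 ↔ Int.fract ((m : ℝ) * Real.logb 2 x) = 0 := by
  rw [phase, Complex.exp_eq_one_iff, Int.fract_eq_zero_iff]
  have hpi : (2 * Real.pi : ℝ) ≠ 0 := by positivity
  constructor
  · rintro ⟨n, hn⟩
    refine ⟨n, ?_⟩
    have h2 := congrArg Complex.im hn
    simp at h2
    apply mul_left_cancel₀ hpi
    linarith
  · rintro ⟨n, hn⟩
    refine ⟨n, ?_⟩
    rw [← hn]
    push_cast
    ring

lemma phase_alpha {r : ℕ} (p : Fin (r + 2) → Fin (r + 2) → ℝ) (hppos : ∀ j k, 0 < p j k)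
    (m : ℕ) (j k : Fin (r + 2)) :
    Int.fract ((m : ℝ) * alphaJK p j k) = 0 ↔
      phase m (p j 0) * phase m (p j j) = phase m (p k 0) * phase m (p j k) := by
  rw [alphaJK, ← phase_eq_one_iff,
    phase_div m (mul_pos (hppos _ _) (hppos _ _)) (mul_pos (hppos _ _) (hppos _ _)),
    phase_mul m (hppos _ _) (hppos _ _), phase_mul m (hppos _ _) (hppos _ _),
    div_eq_one_iff_eq (mul_ne_zero (phase_ne _ _) (phase_ne _ _))]

lemma Amat_mulVec {r : ℕ} (p : Fin r → Fin r → ℝ) (m : ℕ) (v : Fin r → ℂ) (j : Fin r) :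
    (AmatPos p (m : ℤ)).mulVec v j = ∑ k, (p k j : ℂ) * ((phase m (p k j))⁻¹ * v k) := by
  rw [Matrix.mulVec, dotProduct]
  refine Finset.sum_congr rfl fun k _ => ?_
  rw [AmatPos, Matrix.of_apply, phase, ← Complex.exp_neg, mul_assoc]
  congr 3
  push_cast
  ring

/-- Every eigenvalue of `A_m` has modulus at most `1`. -/
lemma eigen_norm_le {r : ℕ} (p : Fin (r + 2) → Fin (r + 2) → ℝ)
    (hppos : ∀ j k, 0 < p j k) (hpsum : ∀ k, ∑ j, p j k = 1) (m : ℕ)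
    (lam : ℂ) (v : Fin (r + 2) → ℂ) (hv : v ≠ 0)
    (h : (AmatPos p (m : ℤ)).mulVec v = lam • v) : ‖lam‖ ≤ 1 := by
  obtain ⟨j, hj⟩ := Finite.exists_max (fun j => ‖v j‖)
  have hpos : 0 < ‖v j‖ := by
    obtain ⟨k, hk⟩ := Function.ne_iff.1 hv
    exact (norm_pos_iff.2 hk).trans_le (hj k)
  have hle : ‖lam‖ * ‖v j‖ ≤ 1 * ‖v j‖ := by
    rw [← norm_mul, ← smul_eq_mul, ← Pi.smul_apply, ← h, Amat_mulVec, ← hpsum j,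
      Finset.sum_mul]
    refine norm_sum_le_of_le _ fun k _ => ?_
    rw [norm_mul, norm_mul, norm_inv, norm_phase, inv_one, one_mul, Complex.norm_real,
      Real.norm_of_nonneg (hppos k j).le]
    exact mul_le_mul_of_nonneg_left (hj k) (hppos k j).le
  exact le_of_mul_le_mul_right hle hpos

/-- An eigenvector for an eigenvalue of modulus `1` has no zero entry and determines the phases
of the matrix entries. -/
lemma phase_of_eigen {r : ℕ} (p : Fin (r + 2) → Fin (r + 2) → ℝ)
    (hppos : ∀ j k, 0 < p j k) (hpsum : ∀ k, ∑ j, p j k = 1) (m : ℕ)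
    (lam : ℂ) (hlam : ‖lam‖ = 1) (v : Fin (r + 2) → ℂ) (hv : v ≠ 0)
    (h : (AmatPos p (m : ℤ)).mulVec v = lam • v) :
    (∀ j, v j ≠ 0) ∧ ∀ j k, (phase m (p k j))⁻¹ * v k = lam * v j := by
  have key : ∀ j, (∀ k, ‖v k‖ ≤ ‖v j‖) → ∀ k, (phase m (p k j))⁻¹ * v k = lam * v j := by
    intro j hj
    refine eq_of_weighted_sum (fun k => p k j) (fun k => hppos k j) (hpsum j) _ _ ?_ ?_
    · intro k
      rw [norm_mul, norm_mul, norm_inv, norm_phase, hlam, inv_one, one_mul, one_mul]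
      exact hj k
    · rw [← Amat_mulVec, h, Pi.smul_apply, smul_eq_mul]
  obtain ⟨j, hj⟩ := Finite.exists_max (fun j => ‖v j‖)
  have hpos : 0 < ‖v j‖ := by
    obtain ⟨k, hk⟩ := Function.ne_iff.1 hv
    exact (norm_pos_iff.2 hk).trans_le (hj k)
  have hconst : ∀ k, ‖v k‖ = ‖v j‖ := fun k => by
    have := congrArg norm (key j hj k)
    rwa [norm_mul, norm_mul, norm_inv, norm_phase, hlam, inv_one, one_mul, one_mul] at this
  refine ⟨fun k => norm_pos_iff.1 (by rw [hconst k]; exact hpos), fun k => key k fun l => ?_⟩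
  rw [hconst l, hconst k]

/-- The set of moduli of the eigenvalues is finite. -/
lemma finite_moduli {r : ℕ} (A : Matrix (Fin r) (Fin r) ℂ) :
    {x : ℝ | ∃ lam : ℂ,
      (∃ v : Fin r → ℂ, v ≠ 0 ∧ A.mulVec v = lam • v) ∧ x = ‖lam‖}.Finite := by
  refine ((Module.End.finite_hasEigenvalue (Matrix.toLin' A)).image norm).subset ?_
  rintro x ⟨lam, ⟨v, hv, h⟩, rfl⟩
  refine ⟨lam, Module.End.hasEigenvalue_of_hasEigenvector (x := v) ?_, rfl⟩
  exact ⟨Module.End.mem_eigenspace_iff.2 (by rw [Matrix.toLin'_apply, h]), hv⟩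

lemma specRad_eq_one_iff {r : ℕ} (p : Fin (r + 2) → Fin (r + 2) → ℝ)
    (hppos : ∀ j k, 0 < p j k) (hpsum : ∀ k, ∑ j, p j k = 1) (m : ℕ) :
    specRad (AmatPos p (m : ℤ)) = 1 ↔
      ∀ j k, Int.fract ((m : ℝ) * alphaJK p j k) = 0 := by
  constructor
  · intro hs j k
    have hne : {x : ℝ | ∃ lam : ℂ, (∃ v : Fin (r + 2) → ℂ, v ≠ 0 ∧
        (AmatPos p (m : ℤ)).mulVec v = lam • v) ∧ x = ‖lam‖}.Nonempty := by
      -- The supremum of the empty set is `0` by convention, hence not `1`.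
      rw [Set.nonempty_iff_ne_empty]
      intro he
      rw [specRad, he, Real.sSup_empty] at hs
      exact zero_ne_one hs
    have hmem := hne.csSup_mem (finite_moduli _)
    rw [← specRad, hs] at hmem
    obtain ⟨lam, ⟨v, hv, h⟩, hlam⟩ := hmem
    obtain ⟨hv0, hph⟩ := phase_of_eigen p hppos hpsum m lam hlam.symm v hv h
    have hl : lam ≠ 0 := norm_pos_iff.1 (by rw [← hlam]; exact one_pos)
    have hval : ∀ a b, phase m (p b a) = v b / (lam * v a) := fun a b => by
      rw [eq_div_iff (mul_ne_zero hl (hv0 a)), ← hph a b,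
        mul_inv_cancel_left₀ (phase_ne _ _)]
    rw [phase_alpha p hppos]
    simp only [hval]
    have := hv0 j
    have := hv0 k
    have := hv0 0
    field_simp
  · intro hf
    simp only [phase_alpha p hppos] at hf
    have hdiag : ∀ j, phase m (p j j) = phase m (p 0 0) := fun j => by
      have := hf j 0
      rw [mul_comm] at this
      exact mul_right_cancel₀ (phase_ne m (p j 0)) this
    have hgreat : IsGreatest {x : ℝ | ∃ lam : ℂ, (∃ v : Fin (r + 2) → ℂ, v ≠ 0 ∧
        (AmatPos p (m : ℤ)).mulVec v = lam • v) ∧ x = ‖lam‖} 1 := by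
      constructor
      · refine ⟨(phase m (p 0 0))⁻¹, ⟨fun j => phase m (p j 0), ?_, ?_⟩, ?_⟩
        · intro h0
          exact phase_ne m (p 0 0) (congrFun h0 0)
        · funext j
          rw [Amat_mulVec, Pi.smul_apply, smul_eq_mul]
          have hterm : ∀ k, (phase m (p k j))⁻¹ * phase m (p k 0) =
              (phase m (p 0 0))⁻¹ * phase m (p j 0) := fun k => by
            have h1 := hf k j
            rw [hdiag k] at h1
            have := phase_ne m (p k j)
            have := phase_ne m (p 0 0)
            field_simp
            linear_combination h1
          simp only [hterm]
          rw [← Finset.sum_mul, ← Complex.ofReal_sum, hpsum j, Complex.ofReal_one, one_mul]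
        · rw [norm_inv, norm_phase, inv_one]
      · rintro x ⟨lam, ⟨v, hv, h⟩, rfl⟩
        exact eigen_norm_le p hppos hpsum m lam v hv h
    exact hgreat.csSup_eq

theorem spectral_radius_one_iff_fract_zero (r : ℕ)
    (p : Fin (r + 2) → Fin (r + 2) → ℝ)
    (hppos : ∀ j k, 0 < p j k) (hpsum : ∀ k, ∑ j, p j k = 1)
    (m : ℕ) (hm : 0 < m) :
    (specRad (AmatPos p (m : ℤ)) = 1 ↔
      ∀ j k, Int.fract ((m : ℝ) * alphaJK p j k) = 0) ∧
    ((∃ m' : ℕ, 0 < m' ∧ specRad (AmatPos p (m' : ℤ)) = 1) ↔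
      ∀ j k, ∃ q : ℚ, alphaJK p j k = (q : ℝ)) := by
  refine ⟨specRad_eq_one_iff p hppos hpsum m, ?_⟩
  simp only [specRad_eq_one_iff p hppos hpsum]
  constructor
  · rintro ⟨m', hm', h⟩ j k
    obtain ⟨n, hn⟩ := Int.fract_eq_zero_iff.1 (h j k)
    refine ⟨(n : ℚ) / m', ?_⟩
    have : (m' : ℝ) ≠ 0 := by exact_mod_cast hm'.ne'
    push_cast
    rw [eq_div_iff this, hn, mul_comm]
  · intro h
    choose q hq using h
    refine ⟨∏ x : Fin (r + 2) × Fin (r + 2), (q x.1 x.2).den,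
      Finset.prod_pos fun x _ => (q x.1 x.2).den_pos, fun j k => ?_⟩
    obtain ⟨c, hc⟩ := Finset.dvd_prod_of_mem
      (fun x : Fin (r + 2) × Fin (r + 2) => (q x.1 x.2).den) (mem_univ (j, k))
    rw [hc, hq, Int.fract_eq_zero_iff]
    refine ⟨c * (q j k).num, ?_⟩
    have h1 : ((q j k).den : ℝ) * (q j k : ℝ) = (q j k).num := by
      exact_mod_cast Rat.den_mul_eq_num (q j k)
    push_cast
    rw [← h1]
    ring
end

section
/- Let the transition matrix {p(j|k)} be strictly positive, let all initial probabilities p_j be strictly positive, and let M be a positive integer such that M·α_{jk} ∈ ℤ for all j,k ∈ {1,…,r}. Then for every n ≥ 1 and every string xⁿ = (x₁,…,xₙ) ∈ {1,…,r}ⁿ, the fractional part of −M·log μ(xⁿ) equals the fractional part of ζ_{x₁ xₙ}(n); in particular it depends on xⁿ only through x₁ and xₙ. -/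
/-- A single transition costs, modulo `1`, the constant `-M log p(1|1)` plus a coboundary. -/
theorem transition_congr {r : ℕ} (p : Fin (r + 2) → Fin (r + 2) → ℝ)
    (hppos : ∀ j k, 0 < p j k) (M : ℕ)
    (hMint : ∀ j k, ∃ z : ℤ, (M : ℝ) * alphaJK p j k = (z : ℝ)) (j k : Fin (r + 2)) :
    ∃ z : ℤ, -(M : ℝ) * Real.logb 2 (p j k) =
      (M : ℝ) * (-Real.logb 2 (p 0 0) + Real.logb 2 (p k 0) - Real.logb 2 (p j 0)) + z := by
  have alpha_eq : ∀ j k, alphaJK p j k = Real.logb 2 (p j 0) + Real.logb 2 (p j j)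
      - (Real.logb 2 (p k 0) + Real.logb 2 (p j k)) := fun j k => by
    have h := fun a b => (hppos a b).ne'
    rw [alphaJK, Real.logb_div (mul_ne_zero (h _ _) (h _ _)) (mul_ne_zero (h _ _) (h _ _)),
      Real.logb_mul (h _ _) (h _ _), Real.logb_mul (h _ _) (h _ _)]
  obtain ⟨a, ha⟩ := hMint j k
  obtain ⟨b, hb⟩ := hMint j 0
  rw [alpha_eq] at ha hb
  refine ⟨a - b, ?_⟩
  push_cast
  linear_combination ha - hb

/-- The telescoped form of `transition_congr` along a string with `n` transitions. -/
theorem path_congr {r : ℕ} (p : Fin (r + 2) → Fin (r + 2) → ℝ)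
    (hppos : ∀ j k, 0 < p j k) (M : ℕ)
    (hMint : ∀ j k, ∃ z : ℤ, (M : ℝ) * alphaJK p j k = (z : ℝ)) (n : ℕ)
    (x : Fin (n + 1) → Fin (r + 2)) :
    ∃ z : ℤ, -(M : ℝ) * Real.logb 2 (∏ t : Fin n, p (x t.succ) (x t.castSucc)) =
      (M : ℝ) * (-(n : ℝ) * Real.logb 2 (p 0 0) + Real.logb 2 (p (x 0) 0)
        - Real.logb 2 (p (x (Fin.last n)) 0)) + z := by
  induction n with
  | zero => exact ⟨0, by simp⟩
  | succ n ih =>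
    obtain ⟨a, ha⟩ := ih (fun t => x t.castSucc)
    obtain ⟨b, hb⟩ := transition_congr p hppos M hMint (x (Fin.last n).succ)
      (x (Fin.last n).castSucc)
    refine ⟨a + b, ?_⟩
    rw [Fin.prod_univ_castSucc, Real.logb_mul
      (Finset.prod_ne_zero_iff.mpr fun t _ => (hppos _ _).ne') (hppos _ _).ne']
    simp only [Fin.succ_castSucc, Fin.succ_last, Fin.castSucc_zero] at ha hb ⊢
    push_cast
    linear_combination ha + hb

theorem fract_log_prob_depends_on_endpoints (r : ℕ)
    (p : Fin (r + 2) → Fin (r + 2) → ℝ) (pinit : Fin (r + 2) → ℝ)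
    (hppos : ∀ j k, 0 < p j k) (hpsum : ∀ k, ∑ j, p j k = 1)
    (hinitpos : ∀ j, 0 < pinit j) (hinit1 : ∑ j, pinit j = 1)
    (M : ℕ) (hM : 0 < M)
    (hMint : ∀ j k, ∃ z : ℤ, (M : ℝ) * alphaJK p j k = (z : ℝ)) :
    ∀ (n : ℕ) (x : Fin (n + 1) → Fin (r + 2)),
      Int.fract (-(M : ℝ) * Real.logb 2 (markovProb pinit p x)) =
        Int.fract (zetaJK p pinit M (x 0) (x (Fin.last n)) (n + 1)) := by
  intro n x
  obtain ⟨z, hz⟩ := path_congr p hppos M hMint n x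
  rw [Int.fract_eq_fract]
  refine ⟨z, ?_⟩
  rw [markovProb, zetaJK, Real.logb_mul (hinitpos _).ne'
    (Finset.prod_ne_zero_iff.mpr fun t _ => (hppos _ _).ne')]
  push_cast
  linear_combination hz
end

section
/- Let the r×r stochastic transition matrix {p(j|k)} be strictly positive and let M be a positive integer such that M·α_{jk} ∈ ℤ for all j,k. Then for every nonzero integer ℓ, the complex number λ = exp(−2πi·ℓM·log p(1|1)) is an eigenvalue of modulus 1 of the matrix A_{ℓM}, with right eigenvector x whose j-th component is x_j = exp(2πi·ℓM·log[ p(j|1)/p(j|j) ]); that is, A_{ℓM}·x = λ·x. -/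
theorem alphaJK_eq {r : ℕ} (p : Fin (r + 2) → Fin (r + 2) → ℝ) (hppos : ∀ j k, 0 < p j k)
    (j k : Fin (r + 2)) :
    alphaJK p j k = Real.logb 2 (p j 0) + Real.logb 2 (p j j)
      - Real.logb 2 (p k 0) - Real.logb 2 (p j k) := by
  have h := fun a b => (hppos a b).ne'
  rw [alphaJK, Real.logb_div (mul_ne_zero (h _ _) (h _ _)) (mul_ne_zero (h _ _) (h _ _)),
    Real.logb_mul (h _ _) (h _ _), Real.logb_mul (h _ _) (h _ _)]
  ring

theorem dominant_eigenvalue_and_right_eigenvector (r : ℕ)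
    (p : Fin (r + 2) → Fin (r + 2) → ℝ)
    (hppos : ∀ j k, 0 < p j k) (hpsum : ∀ k, ∑ j, p j k = 1)
    (M : ℕ) (hM : 0 < M)
    (hMint : ∀ j k, ∃ z : ℤ, (M : ℝ) * alphaJK p j k = (z : ℝ))
    (l : ℤ) (hl : l ≠ 0) :
    ‖Complex.exp (-(2 * (Real.pi : ℂ) * Complex.I * ((l * M : ℤ) : ℂ) *
        ((Real.logb 2 (p 0 0) : ℝ) : ℂ)))‖ = 1 ∧
    (AmatPos p (l * M)).mulVec
        (fun j => Complex.exp (2 * (Real.pi : ℂ) * Complex.I * ((l * M : ℤ) : ℂ) *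
          ((Real.logb 2 (p j 0 / p j j) : ℝ) : ℂ))) =
      Complex.exp (-(2 * (Real.pi : ℂ) * Complex.I * ((l * M : ℤ) : ℂ) *
          ((Real.logb 2 (p 0 0) : ℝ) : ℂ))) •
        (fun j => Complex.exp (2 * (Real.pi : ℂ) * Complex.I * ((l * M : ℤ) : ℂ) *
          ((Real.logb 2 (p j 0 / p j j) : ℝ) : ℂ))) := by
  have h := fun a b => (hppos a b).ne'
  refine ⟨?_, ?_⟩
  · rw [Complex.norm_exp]
    simp
  funext j
  simp only [Matrix.mulVec, dotProduct, AmatPos, Matrix.of_apply, Pi.smul_apply, smul_eq_mul]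
  have key : ∀ k,
      Complex.exp (-(2 * (Real.pi : ℂ) * Complex.I * ((l * M : ℤ) : ℂ) *
          ((Real.logb 2 (p k j) : ℝ) : ℂ))) *
        Complex.exp (2 * (Real.pi : ℂ) * Complex.I * ((l * M : ℤ) : ℂ) *
          ((Real.logb 2 (p k 0 / p k k) : ℝ) : ℂ)) =
      Complex.exp (-(2 * (Real.pi : ℂ) * Complex.I * ((l * M : ℤ) : ℂ) *
          ((Real.logb 2 (p 0 0) : ℝ) : ℂ))) *
        Complex.exp (2 * (Real.pi : ℂ) * Complex.I * ((l * M : ℤ) : ℂ) *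
          ((Real.logb 2 (p j 0 / p j j) : ℝ) : ℂ)) := by
    intro k
    obtain ⟨a, ha⟩ := hMint k j
    obtain ⟨b, hb⟩ := hMint k 0
    obtain ⟨c, hc⟩ := hMint j 0
    rw [alphaJK_eq p hppos] at ha hb hc
    have ha' := congrArg (fun t : ℝ => (t : ℂ)) ha
    have hb' := congrArg (fun t : ℝ => (t : ℂ)) hb
    have hc' := congrArg (fun t : ℝ => (t : ℂ)) hc
    rw [← Complex.exp_add, ← Complex.exp_add, Complex.exp_eq_exp_iff_exists_int]
    -- `a`, `b`, `c` are `M` times `α_{kj}`, `α_{k0}`, `α_{j0}`.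
    refine ⟨l * (a - 2 * b + c), ?_⟩
    rw [Real.logb_div (h _ _) (h _ _), Real.logb_div (h _ _) (h _ _)]
    push_cast at ha' hb' hc' ⊢
    linear_combination (2 * (Real.pi : ℂ) * Complex.I * (l : ℂ)) * (ha' - 2 * hb' + hc')
  have hsum : ∑ k, (p k j : ℂ) = 1 := by exact_mod_cast hpsum j
  simp only [mul_assoc (Complex.ofReal (p _ j))]
  rw [Finset.sum_congr rfl fun k _ => congrArg (fun t => (p k j : ℂ) * t) (key k),
    ← Finset.sum_mul, hsum, one_mul]
end

section
/- Let θ > 0, let N be a positive integer, and let f: ℝ → ℝ be a 1-periodic function satisfying |f(u) − f(v)| ≤ |u − v|/θ for all u,v ∈ ℝ and |f(u) − f(v)| ≤ 1 for all u,v ∈ ℝ. Let f̂_m = ∫₀¹ f(t)·e^{−2πimt} dt be the Fourier coefficients of f and let {f}_N(u) = Σ_{m=−N}^{N} f̂_m·(1 − |m|/(N+1))·e^{2πimu} be the N-th Fejér (Cesàro) mean of its Fourier series. Then for every u ∈ ℝ and every δ ∈ (0, 1/2), |f(u) − {f}_N(u)| ≤ δ/θ + 1/(N·sin²(πδ)).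 -/
/-!
The Fejér mean is a convolution: `{f}_N(u) = ∫₀¹ f(t) F_N(u - t) dt`, where the Fejér kernel
`F_N(x) = ∑_{|m| ≤ N} (1 - |m|/(N+1)) e^{2πimx} = |∑_{j ≤ N} e^{2πijx}|² / (N+1)` is nonnegative,
1-periodic, has integral one over a period, and satisfies `(N+1) F_N(x) sin²(πx) ≤ 1` (sum the
geometric series). Hence `f(u) - {f}_N(u) = ∫ (f(u) - f(t)) F_N(u - t) dt`, and by periodicity the
integral may be taken over `[u - 1/2, u + 1/2]`. There the integrand is at most
`(δ/θ) F_N(u - t)` when `|u - t| ≤ δ`, by the Lipschitz bound, and at most `1/(N sin²(πδ))`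
otherwise, by the oscillation bound and the decay of the kernel. Integrating the sum of the two
bounds gives the claim.
-/

/-- The Fejér kernel `|∑_{j ≤ N} e^{2πijx}|² / (N+1)`, in its manifestly nonnegative form. -/
noncomputable def fejerKernel (N : ℕ) (x : ℝ) : ℝ :=
  Complex.normSq (∑ j ∈ Finset.range (N + 1),
    Complex.exp (2 * (Real.pi : ℂ) * Complex.I * (x : ℂ)) ^ j) / ((N : ℝ) + 1)

lemma sum_Icc_neg_succ (g : ℤ → ℂ) (N : ℕ) :
    ∑ m ∈ Finset.Icc (-((N + 1 : ℕ) : ℤ)) ((N + 1 : ℕ) : ℤ), g m =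
      ∑ m ∈ Finset.Icc (-(N : ℤ)) (N : ℤ), g m + g (N + 1) + g (-(N + 1)) := by
  have h : Finset.Icc (-((N + 1 : ℕ) : ℤ)) ((N + 1 : ℕ) : ℤ) =
      insert (-(N + 1 : ℤ)) (insert (N + 1 : ℤ) (Finset.Icc (-(N : ℤ)) (N : ℤ))) := by
    ext m
    simp only [Finset.mem_Icc, Finset.mem_insert]
    push_cast
    omega
  rw [h, Finset.sum_insert, Finset.sum_insert]
  · ring
  · simp
  · simp only [Finset.mem_insert, Finset.mem_Icc]
    omega

lemma pow_mul_sum_inv_pow (z : ℂ) (hz : z ≠ 0) (N : ℕ) :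
    z ^ (N + 1) * ∑ j ∈ Finset.range (N + 1), (z⁻¹) ^ j =
      ∑ j ∈ Finset.range (N + 1), z ^ (j + 1) := by
  rw [← Finset.sum_range_reflect (fun j => z ^ (j + 1)), Finset.mul_sum]
  refine Finset.sum_congr rfl fun j hj => ?_
  have hj' : j < N + 1 := Finset.mem_range.mp hj
  have h1 : z ^ (N + 1) = z ^ (N + 1 - 1 - j + 1) * z ^ j := by
    rw [← pow_add]; congr 1; omega
  rw [h1, mul_assoc, ← mul_pow, mul_inv_cancel₀ hz, one_pow, mul_one]

lemma sum_Icc_zpow (z : ℂ) (N : ℕ) :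
    ∑ m ∈ Finset.Icc (-(N : ℤ)) (N : ℤ), z ^ m =
      1 + ∑ j ∈ Finset.range N, z ^ (j + 1) + ∑ j ∈ Finset.range N, (z⁻¹) ^ (j + 1) := by
  induction N with
  | zero => simp
  | succ N ih =>
    rw [sum_Icc_neg_succ, ih, Finset.sum_range_succ, Finset.sum_range_succ, zpow_neg, inv_pow]
    norm_cast
    ring

/-- Multiplying out the two geometric sums, the exponent `m` occurs `N + 1 - |m|` times. -/
lemma sum_triangle_zpow (z : ℂ) (hz : z ≠ 0) (N : ℕ) :
    ∑ m ∈ Finset.Icc (-(N : ℤ)) (N : ℤ), ((N : ℂ) + 1 - (|(m : ℝ)| : ℝ)) * z ^ m =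
      (∑ j ∈ Finset.range (N + 1), z ^ j) * ∑ j ∈ Finset.range (N + 1), (z⁻¹) ^ j := by
  induction N with
  | zero => simp
  | succ N ih =>
    have h1 := pow_mul_sum_inv_pow z hz N
    have h2 := pow_mul_sum_inv_pow z⁻¹ (inv_ne_zero hz) N
    rw [inv_inv] at h2
    have h3 := sum_Icc_zpow z N
    have h4 : z ^ (N + 1) * (z⁻¹) ^ (N + 1) = 1 := by
      rw [← mul_pow, mul_inv_cancel₀ hz, one_pow]
    have habs : |(N : ℝ) + 1| = N + 1 := abs_of_nonneg (by positivity)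
    have h5 : ∑ m ∈ Finset.Icc (-(N : ℤ)) (N : ℤ),
        (((N + 1 : ℕ) : ℂ) + 1 - (|(m : ℝ)| : ℝ)) * z ^ m =
        ∑ m ∈ Finset.Icc (-(N : ℤ)) (N : ℤ), ((N : ℂ) + 1 - (|(m : ℝ)| : ℝ)) * z ^ m +
        ∑ m ∈ Finset.Icc (-(N : ℤ)) (N : ℤ), z ^ m := by
      rw [← Finset.sum_add_distrib]
      refine Finset.sum_congr rfl fun m _ => ?_
      push_cast
      ring
    have e1 : z ^ ((N : ℤ) + 1) = z ^ (N + 1) := by norm_cast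
    have e2 : z ^ (-((N : ℤ) + 1)) = (z⁻¹) ^ (N + 1) := by rw [zpow_neg, inv_pow, e1]
    rw [sum_Icc_neg_succ, h5, ih, h3, Finset.sum_range_succ (fun j => z ^ j) (N + 1),
      Finset.sum_range_succ (fun j => (z⁻¹) ^ j) (N + 1), e1, e2]
    rw [Finset.sum_range_succ (fun j => z ^ (j + 1))] at h1
    rw [Finset.sum_range_succ (fun j => (z⁻¹) ^ (j + 1))] at h2
    push_cast
    have habs2 : |-((N : ℝ) + 1)| = N + 1 := by rw [abs_neg, habs]
    simp only [habs2, habs]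
    push_cast
    linear_combination -h1 - h2 - h4

lemma fejerKernel_eq_sum (N : ℕ) (x : ℝ) :
    (fejerKernel N x : ℂ) = ∑ m ∈ Finset.Icc (-(N : ℤ)) (N : ℤ),
      (1 - (|(m : ℝ)| / ((N : ℝ) + 1) : ℝ)) *
        Complex.exp (2 * (Real.pi : ℂ) * Complex.I * (m : ℂ) * (x : ℂ)) := by
  have hN : (N : ℂ) + 1 ≠ 0 := by exact_mod_cast Nat.succ_ne_zero N
  set z := Complex.exp (2 * (Real.pi : ℂ) * Complex.I * (x : ℂ)) with hz
  have hz0 : z ≠ 0 := Complex.exp_ne_zero _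
  have hconj : (starRingEnd ℂ) z = z⁻¹ := by
    rw [hz, ← Complex.exp_conj, ← Complex.exp_neg]
    congr 1
    simp [Complex.conj_ofNat]
  have h := sum_triangle_zpow z hz0 N
  rw [fejerKernel, ← hz]
  push_cast
  rw [← Complex.mul_conj, map_sum]
  simp only [map_pow, hconj]
  rw [← h, Finset.sum_div]
  refine Finset.sum_congr rfl fun m _ => ?_
  have hzm : z ^ m = Complex.exp (2 * (Real.pi : ℂ) * Complex.I * (m : ℂ) * (x : ℂ)) := by
    rw [hz, ← Complex.exp_int_mul]
    congr 1
    ring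
  rw [hzm]
  field_simp

lemma fejerKernel_nonneg (N : ℕ) (x : ℝ) : 0 ≤ fejerKernel N x :=
  div_nonneg (Complex.normSq_nonneg _) (by positivity)

lemma continuous_fejerKernel (N : ℕ) : Continuous (fejerKernel N) := by
  unfold fejerKernel
  refine Continuous.div_const (Complex.continuous_normSq.comp ?_) _
  fun_prop

lemma fejerKernel_periodic (N : ℕ) : Function.Periodic (fejerKernel N) 1 := by
  intro x
  unfold fejerKernel
  have : 2 * (Real.pi : ℂ) * Complex.I * ((x + 1 : ℝ) : ℂ) =
      2 * (Real.pi : ℂ) * Complex.I * (x : ℂ) + 2 * Real.pi * Complex.I := by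
    push_cast
    ring
  rw [this, Complex.exp_periodic]

/-- Decay of the kernel away from the integers, from `|e^{2πix} - 1| = 2 |sin πx|` and the
closed form of the geometric sum. -/
lemma fejerKernel_mul_sin_sq_le (N : ℕ) (x : ℝ) :
    ((N : ℝ) + 1) * fejerKernel N x * Real.sin (Real.pi * x) ^ 2 ≤ 1 := by
  have hN : (N : ℝ) + 1 ≠ 0 := by positivity
  rw [fejerKernel, mul_div_cancel₀ _ hN]
  set z := Complex.exp (2 * (Real.pi : ℂ) * Complex.I * (x : ℂ)) with hz
  have hz' : z = Complex.exp (Complex.I * ((2 * Real.pi * x : ℝ) : ℂ)) := by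
    rw [hz]; congr 1; push_cast; ring
  have h1 : ‖z - 1‖ = 2 * |Real.sin (Real.pi * x)| := by
    rw [hz', Complex.norm_exp_I_mul_ofReal_sub_one, Real.norm_eq_abs, abs_mul,
      abs_of_pos (by norm_num : (0 : ℝ) < 2)]
    congr 3
    ring
  have hzn : ‖z‖ = 1 := by rw [hz', Complex.norm_exp_I_mul_ofReal]
  have h2 : ‖z ^ (N + 1) - 1‖ ≤ 2 := by
    refine (norm_sub_le _ _).trans ?_
    rw [norm_pow, hzn, one_pow, norm_one]
    norm_num
  rw [← geom_sum_mul, norm_mul, h1] at h2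
  rw [Complex.normSq_eq_norm_sq, ← sq_abs (Real.sin _), ← mul_pow]
  exact pow_le_one₀ (by positivity) (by linarith)

/-- The Fejér mean of a continuous function is its convolution with the Fejér kernel. -/
lemma fejer_mean_eq_integral (N : ℕ) (g : ℝ → ℝ) (hg : Continuous g) (u : ℝ) :
    ∑ m ∈ Finset.Icc (-(N : ℤ)) (N : ℤ),
          (∫ t in (0 : ℝ)..1, ((g t : ℝ) : ℂ) *
              Complex.exp (-(2 * (Real.pi : ℂ) * Complex.I * (m : ℂ) * (t : ℂ)))) *
            (1 - (|(m : ℝ)| / ((N : ℝ) + 1) : ℝ)) *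
            Complex.exp (2 * (Real.pi : ℂ) * Complex.I * (m : ℂ) * (u : ℂ)) =
      ((∫ t in (0 : ℝ)..1, g t * fejerKernel N (u - t) : ℝ) : ℂ) := by
  rw [← intervalIntegral.integral_ofReal]
  simp only [Complex.ofReal_mul, fejerKernel_eq_sum, Finset.mul_sum]
  rw [intervalIntegral.integral_finsetSum]
  · refine Finset.sum_congr rfl fun m _ => ?_
    rw [← intervalIntegral.integral_mul_const, ← intervalIntegral.integral_mul_const]
    refine intervalIntegral.integral_congr fun t _ => ?_
    have : Complex.exp (2 * (Real.pi : ℂ) * Complex.I * (m : ℂ) * ((u - t : ℝ) : ℂ)) =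
        Complex.exp (-(2 * (Real.pi : ℂ) * Complex.I * (m : ℂ) * (t : ℂ))) *
        Complex.exp (2 * (Real.pi : ℂ) * Complex.I * (m : ℂ) * (u : ℂ)) := by
      rw [← Complex.exp_add]
      congr 1
      push_cast
      ring
    simp only [this]
    ring
  · intro m _
    refine Continuous.intervalIntegrable ?_ _ _
    fun_prop

lemma integral_exp_neg_int (m : ℤ) (hm : m ≠ 0) :
    ∫ t in (0 : ℝ)..1,
      Complex.exp (-(2 * (Real.pi : ℂ) * Complex.I * (m : ℂ) * (t : ℂ))) = 0 := by
  have hc : -(2 * (Real.pi : ℂ) * Complex.I * (m : ℂ)) ≠ 0 := by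
    simp [Real.pi_ne_zero, hm]
  have h := integral_exp_mul_complex (a := 0) (b := 1) hc
  have h1 : Complex.exp (-(2 * (Real.pi : ℂ) * Complex.I * (m : ℂ))) = 1 :=
    Complex.exp_eq_one_iff.mpr ⟨-m, by push_cast; ring⟩
  simp only [neg_mul] at h ⊢
  rw [h]
  simp [h1]

lemma integral_fejerKernel_sub (N : ℕ) (u : ℝ) :
    ∫ t in (0 : ℝ)..1, fejerKernel N (u - t) = 1 := by
  have h := fejer_mean_eq_integral N (fun _ => 1) continuous_const u
  rw [Finset.sum_eq_single 0] at h
  · simp only [one_mul] at h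
    have h' : (1 : ℂ) = ((∫ t in (0 : ℝ)..1, fejerKernel N (u - t) : ℝ) : ℂ) := by
      rw [← h]; simp
    exact_mod_cast h'.symm
  · intro m _ hm
    simp only [Complex.ofReal_one, one_mul, integral_exp_neg_int m hm, zero_mul]
  · simp

lemma integral_eq_centered (g : ℝ → ℝ) (hg : Function.Periodic g 1) (u : ℝ) :
    ∫ t in (0 : ℝ)..1, g t = ∫ t in (u - 1 / 2)..(u + 1 / 2), g t := by
  have h := hg.intervalIntegral_add_eq 0 (u - 1 / 2)
  rw [zero_add] at h
  rw [h]
  congr 1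
  ring

theorem fejer_approximation_error_bound (θ : ℝ) (hθ : 0 < θ)
    (N : ℕ) (hN : 0 < N) (f : ℝ → ℝ)
    (hper : ∀ u : ℝ, f (u + 1) = f u)
    (hlip : ∀ u v : ℝ, |f u - f v| ≤ |u - v| / θ)
    (hosc : ∀ u v : ℝ, |f u - f v| ≤ 1)
    (u δ : ℝ) (hδ : δ ∈ Set.Ioo (0 : ℝ) (1 / 2)) :
    ‖((f u : ℝ) : ℂ) -
        ∑ m ∈ Finset.Icc (-(N : ℤ)) (N : ℤ),
          (∫ t in (0 : ℝ)..1, ((f t : ℝ) : ℂ) *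
              Complex.exp (-(2 * (Real.pi : ℂ) * Complex.I * (m : ℂ) * (t : ℂ)))) *
            (1 - (|(m : ℝ)| / ((N : ℝ) + 1) : ℝ)) *
            Complex.exp (2 * (Real.pi : ℂ) * Complex.I * (m : ℂ) * (u : ℂ))‖ ≤
      δ / θ + 1 / ((N : ℝ) * Real.sin (Real.pi * δ) ^ 2) := by
  obtain ⟨hδ0, hδ1⟩ := hδ
  have hfc : Continuous f := by
    refine (LipschitzWith.of_dist_le_mul (K := ⟨1 / θ, by positivity⟩) fun x y => ?_).continuous
    have := hlip x y
    rw [Real.dist_eq, Real.dist_eq]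
    change _ ≤ 1 / θ * _
    rwa [one_div_mul_eq_div]
  have hKc : Continuous fun t => fejerKernel N (u - t) :=
    (continuous_fejerKernel N).comp (by fun_prop)
  have hK1 := integral_fejerKernel_sub N u
  have hKp : Function.Periodic (fun t => fejerKernel N (u - t)) 1 := by
    intro t
    change fejerKernel N (u - (t + 1)) = fejerKernel N (u - t)
    rw [← fejerKernel_periodic N (u - (t + 1))]
    congr 1
    ring
  rw [fejer_mean_eq_integral N f hfc u]
  have hdiff : f u - ∫ t in (0 : ℝ)..1, f t * fejerKernel N (u - t) =
      ∫ t in (u - 1 / 2)..(u + 1 / 2), (f u - f t) * fejerKernel N (u - t) := by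
    have hp : Function.Periodic (fun t => (f u - f t) * fejerKernel N (u - t)) 1 := by
      intro t
      have := hKp t
      simp only at this
      simp only [this, hper]
    rw [← integral_eq_centered _ hp]
    have hfK : Continuous fun t => f t * fejerKernel N (u - t) := hfc.mul hKc
    simp only [sub_mul]
    rw [intervalIntegral.integral_sub ((hKc.const_mul _).intervalIntegrable _ _)
      (hfK.intervalIntegrable _ _), intervalIntegral.integral_const_mul, hK1, mul_one]
  rw [← Complex.ofReal_sub, Complex.norm_real, hdiff]
  have hN' : (0 : ℝ) < N := by exact_mod_cast hN
  have hs : 0 < Real.sin (Real.pi * δ) :=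
    Real.sin_pos_of_pos_of_lt_pi (by positivity) (by nlinarith [Real.pi_pos])
  have hbound : ∀ t ∈ Set.Icc (u - 1 / 2) (u + 1 / 2),
      ‖(f u - f t) * fejerKernel N (u - t)‖ ≤
        δ / θ * fejerKernel N (u - t) + 1 / ((N : ℝ) * Real.sin (Real.pi * δ) ^ 2) := by
    intro t ht
    have hK0 := fejerKernel_nonneg N (u - t)
    rw [norm_mul, Real.norm_eq_abs, Real.norm_eq_abs, abs_of_nonneg hK0]
    rcases le_total |u - t| δ with hle | hge
    · have h1 : |f u - f t| ≤ δ / θ := (hlip u t).trans (by gcongr)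
      have h2 : 0 ≤ 1 / ((N : ℝ) * Real.sin (Real.pi * δ) ^ 2) := by positivity
      nlinarith [mul_le_mul_of_nonneg_right h1 hK0]
    · have hhalf : |u - t| ≤ 1 / 2 := abs_le.mpr ⟨by linarith [ht.2], by linarith [ht.1]⟩
      have hsin : Real.sin (Real.pi * δ) ≤ Real.sin (Real.pi * |u - t|) :=
        Real.sin_le_sin_of_le_of_le_pi_div_two (by nlinarith [Real.pi_pos])
          (by nlinarith [Real.pi_pos]) (by gcongr)
      have hsq : Real.sin (Real.pi * |u - t|) ^ 2 = Real.sin (Real.pi * (u - t)) ^ 2 := by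
        rcases abs_choice (u - t) with h | h <;> rw [h]
        rw [mul_neg, Real.sin_neg, neg_sq]
      have hsin2 : Real.sin (Real.pi * δ) ^ 2 ≤ Real.sin (Real.pi * (u - t)) ^ 2 := by
        rw [← hsq]
        gcongr
      have hdec := fejerKernel_mul_sin_sq_le N (u - t)
      have hK : fejerKernel N (u - t) ≤ 1 / ((N : ℝ) * Real.sin (Real.pi * δ) ^ 2) := by
        rw [le_div_iff₀ (by positivity)]
        calc fejerKernel N (u - t) * ((N : ℝ) * Real.sin (Real.pi * δ) ^ 2)
            ≤ fejerKernel N (u - t) * (((N : ℝ) + 1) * Real.sin (Real.pi * (u - t)) ^ 2) := by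
              gcongr
              linarith
          _ ≤ 1 := by linarith
      have h1 : |f u - f t| * fejerKernel N (u - t) ≤ 1 * fejerKernel N (u - t) :=
        mul_le_mul_of_nonneg_right (hosc u t) hK0
      have h2 : 0 ≤ δ / θ * fejerKernel N (u - t) := by positivity
      linarith
  have hab : u - 1 / 2 ≤ u + 1 / 2 := by linarith
  have hKi : IntervalIntegrable (fun t => δ / θ * fejerKernel N (u - t)) MeasureTheory.volume
      (u - 1 / 2) (u + 1 / 2) := (hKc.const_mul _).intervalIntegrable _ _
  refine (intervalIntegral.norm_integral_le_of_norm_le hab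
    (Filter.Eventually.of_forall fun t ht => hbound t (Set.Ioc_subset_Icc_self ht))
    (hKi.add intervalIntegrable_const)).trans (le_of_eq ?_)
  rw [intervalIntegral.integral_add hKi intervalIntegrable_const,
    intervalIntegral.integral_const_mul, ← integral_eq_centered _ hKp, hK1,
    intervalIntegral.integral_const, smul_eq_mul]
  ring
end

section
/- Let 0 < θ < 1 and let ϱ_θ^−: ℝ → ℝ be the 1-periodic function defined on [0,1) by ϱ_θ^−(u) = ((1−θ)/θ)·u for 0 ≤ u < θ and ϱ_θ^−(u) = 1 − u for θ ≤ u < 1. Then for every nonzero integer m, the Fourier coefficient of ϱ_θ^− satisfies ∫₀¹ ϱ_θ^−(u)·e^{−2πimu} du = (1 − e^{−2πimθ}) / ((2πim)²·θ). -/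
/-!
On `(0, θ)` and on `(θ, 1)` the function `ϱ_θ^−` is affine, and an affine function times `e^{-cu}`
has the elementary primitive `-((pu + q)/c + p/c²) e^{-cu}` (`integral_affine_mul_exp`). With
`c = 2πim` one has `e^{-c} = 1`. The one-sided values of `ϱ_θ^−` at `θ` agree and those at `0` and
`1` vanish, so the terms in `1/c` cancel, and the slopes `(1-θ)/θ` and `-1` differ by `1/θ`, which
leaves `(1 - e^{-cθ})/(c²θ)`.
-/

/-- The 1-periodic function ϱ_θ^−, equal to ((1−θ)/θ)·u on [0,θ) and to 1−u on
[θ,1) (extended periodically via the fractional part). -/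
noncomputable def vrhoMinus (θ u : ℝ) : ℝ :=
  if Int.fract u < θ then ((1 - θ) / θ) * Int.fract u else 1 - Int.fract u

theorem integral_affine_mul_exp (c p q : ℂ) (hc : c ≠ 0) (a b : ℝ) :
    ∫ u in a..b, (p * (u : ℂ) + q) * Complex.exp (-(c * (u : ℂ))) =
      -((p * b + q) / c + p / c ^ 2) * Complex.exp (-(c * b)) -
        -((p * a + q) / c + p / c ^ 2) * Complex.exp (-(c * a)) := by
  apply intervalIntegral.integral_eq_sub_of_hasDerivAt
    (f := fun u : ℝ => -((p * (u : ℂ) + q) / c + p / c ^ 2) * Complex.exp (-(c * (u : ℂ))))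
  · intro u _
    have h1 : HasDerivAt (fun u : ℝ => (u : ℂ)) 1 u := Complex.ofRealCLM.hasDerivAt
    have h2 := ((((h1.const_mul p).add_const q).div_const c).add_const (p / c ^ 2)).neg
    have h3 := (h1.const_mul c).neg.cexp
    refine (h2.mul h3).congr_deriv ?_
    simp only [Pi.neg_apply]
    field_simp
    ring
  · exact Continuous.intervalIntegrable (by fun_prop) _ _

theorem fourier_coefficients_vrhoMinus (θ : ℝ) (hθ0 : 0 < θ) (hθ1 : θ < 1)
    (m : ℤ) (hm : m ≠ 0) :
    ∫ u in (0 : ℝ)..1, ((vrhoMinus θ u : ℝ) : ℂ) *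
        Complex.exp (-(2 * (Real.pi : ℂ) * Complex.I * (m : ℂ) * (u : ℂ))) =
      (1 - Complex.exp (-(2 * (Real.pi : ℂ) * Complex.I * (m : ℂ) * (θ : ℂ)))) /
        ((2 * (Real.pi : ℂ) * Complex.I * (m : ℂ)) ^ 2 * (θ : ℂ)) := by
  have hc : 2 * (Real.pi : ℂ) * Complex.I * (m : ℂ) ≠ 0 :=
    mul_ne_zero Complex.two_pi_I_ne_zero (Int.cast_ne_zero.mpr hm)
  have hexp : Complex.exp (-(2 * (Real.pi : ℂ) * Complex.I * (m : ℂ))) = 1 := by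
    rw [Complex.exp_eq_one_iff]
    exact ⟨-m, by push_cast; ring⟩
  generalize 2 * (Real.pi : ℂ) * Complex.I * (m : ℂ) = c at hc hexp ⊢
  have hθ : (θ : ℂ) ≠ 0 := Complex.ofReal_ne_zero.mpr hθ0.ne'
  have left : Set.EqOn (fun u : ℝ => (((1 - θ) / θ : ℂ) * u + 0) * Complex.exp (-(c * u)))
      (fun u : ℝ => (vrhoMinus θ u : ℂ) * Complex.exp (-(c * u))) (Set.uIoo 0 θ) := by
    rw [Set.uIoo_of_le hθ0.le]
    rintro u ⟨hu0, hu1⟩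
    have hf : Int.fract u = u := Int.fract_eq_self.mpr ⟨hu0.le, hu1.trans hθ1⟩
    simp [vrhoMinus, hf, hu1]
  have right : Set.EqOn (fun u : ℝ => ((-1 : ℂ) * u + 1) * Complex.exp (-(c * u)))
      (fun u : ℝ => (vrhoMinus θ u : ℂ) * Complex.exp (-(c * u))) (Set.uIoo θ 1) := by
    rw [Set.uIoo_of_le hθ1.le]
    rintro u ⟨hu0, hu1⟩
    have hf : Int.fract u = u := Int.fract_eq_self.mpr ⟨(hθ0.trans hu0).le, hu1⟩
    simp only [vrhoMinus, hf, if_neg hu0.not_gt]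
    push_cast
    ring
  rw [← intervalIntegral.integral_add_adjacent_intervals (b := θ)
      (IntervalIntegrable.congr_uIoo (Continuous.intervalIntegrable (by fun_prop) _ _) left)
      (IntervalIntegrable.congr_uIoo (Continuous.intervalIntegrable (by fun_prop) _ _) right),
    ← intervalIntegral.integral_congr_uIoo left, ← intervalIntegral.integral_congr_uIoo right,
    integral_affine_mul_exp c _ _ hc, integral_affine_mul_exp c _ _ hc]
  simp only [Complex.ofReal_zero, Complex.ofReal_one, mul_zero, mul_one, neg_zero,
    Complex.exp_zero, hexp]
  field_simp
  ring
end

section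
/- Let the r×r stochastic transition matrix P = {p(j|k)} be irreducible with period d. If for some integer m the matrix A_m has an eigenvalue λ with |λ| = 1, then for every t ∈ {0, 1, …, d−1}, the number λ·e^{2πit/d} is also an eigenvalue of A_m. -/
/-!
Fix a base state `0` and let `c j` be the length of some path of positive probability from `0` to
`j`. Closing two paths up by a common return path shows that any two paths with the same endpoints
have lengths congruent modulo `d` (`path_length_modEq`), so `c k ≡ c j + 1 [MOD d]` whenever the
step from `j` to `k` is possible: `c` labels the cyclic classes of the chain. With
`ω = exp (2πit/d)`, a `d`-th root of unity, the diagonal matrix `D = diag (ω ^ c j)` then satisfies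
`A_m D = ω D A_m`, because the `(j, k)` entry of `A_m` vanishes unless the step from `j` to `k` is
possible. Hence `D` maps eigenvectors for `λ` to eigenvectors for `ω λ`
(`mulVec_twist`).
-/

/-!
STATEMENT 16: If P is irreducible with period d and A_m has a modulus-1
eigenvalue λ, then λ·e^{2πit/d} is an eigenvalue of A_m for every
t ∈ {0,…,d−1}. The alphabet is `Fin (r+2)`; `p j k = p(j|k)`.
-/

/-- The transition matrix `P` with entry `(j,k)` equal to `p(j|k)`. -/
def Pmat {r : ℕ} (p : Fin r → Fin r → ℝ) : Matrix (Fin r) (Fin r) ℝ :=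
  Matrix.of fun j k => p j k

/-- The matrix A_m with (j,k) entry p(k|j)·exp(−2πi·m·log₂ p(k|j)) when
p(k|j) > 0 and 0 otherwise. -/
noncomputable def Amat {r : ℕ} (p : Fin r → Fin r → ℝ) (m : ℤ) :
    Matrix (Fin r) (Fin r) ℂ :=
  Matrix.of fun j k =>
    if 0 < p k j then
      (p k j : ℂ) *
        Complex.exp (-(2 * (Real.pi : ℂ) * Complex.I * (m : ℂ) *
          ((Real.logb 2 (p k j) : ℝ) : ℂ)))
    else 0

theorem Pmat_pow_nonneg {r : ℕ} {p : Fin r → Fin r → ℝ} (hpnn : ∀ j k, 0 ≤ p j k) (n : ℕ)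
    (j k : Fin r) : 0 ≤ (Pmat p ^ n) j k := by
  induction n generalizing j k with
  | zero =>
    rw [pow_zero, Matrix.one_apply]
    split_ifs <;> norm_num
  | succ n ih =>
    rw [pow_succ, Matrix.mul_apply]
    exact Finset.sum_nonneg fun i _ => mul_nonneg (ih j i) (hpnn i k)

/-- Concatenation of a path from `k` to `i` of length `b` with one from `i` to `j` of length `a`. -/
theorem Pmat_pow_add_pos {r : ℕ} {p : Fin r → Fin r → ℝ} (hpnn : ∀ j k, 0 ≤ p j k)
    {a b : ℕ} {i j k : Fin r} (ha : 0 < (Pmat p ^ a) j i) (hb : 0 < (Pmat p ^ b) i k) :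
    0 < (Pmat p ^ (a + b)) j k := by
  rw [pow_add, Matrix.mul_apply]
  exact Finset.sum_pos'
    (fun x _ => mul_nonneg (Pmat_pow_nonneg hpnn a j x) (Pmat_pow_nonneg hpnn b x k))
    ⟨i, Finset.mem_univ i, mul_pos ha hb⟩

/-- Two paths from `k` to `j` have lengths congruent modulo any common divisor `d` of the lengths
of closed paths: close both up by the same path from `j` back to `k`. -/
theorem path_length_modEq {r : ℕ} {p : Fin r → Fin r → ℝ} (hpnn : ∀ j k, 0 ≤ p j k)
    (hirred : ∀ j k : Fin r, ∃ l : ℕ, 0 < l ∧ 0 < (Pmat p ^ l) j k) {d : ℕ}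
    (hddvd : ∀ (j : Fin r) (n : ℕ), 0 < n → 0 < (Pmat p ^ n) j j → d ∣ n)
    {a b : ℕ} {j k : Fin r} (ha : 0 < (Pmat p ^ a) j k) (hb : 0 < (Pmat p ^ b) j k) :
    a ≡ b [MOD d] := by
  obtain ⟨l, hl, hback⟩ := hirred k j
  have h₁ : d ∣ a + l := hddvd j _ (by omega) (Pmat_pow_add_pos hpnn ha hback)
  have h₂ : d ∣ b + l := hddvd j _ (by omega) (Pmat_pow_add_pos hpnn hb hback)
  exact Nat.ModEq.add_right_cancel' l
    ((Nat.modEq_zero_iff_dvd.2 h₁).trans (Nat.modEq_zero_iff_dvd.2 h₂).symm)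

/-- Twisting by powers of a `d`-th root of unity `ω` along a labelling `c` that increases by one
modulo `d` on every possible step multiplies the eigenvalue by `ω`. -/
theorem mulVec_twist {r : ℕ} {p : Fin r → Fin r → ℝ} {m : ℤ} {d : ℕ} {c : Fin r → ℕ}
    (hc : ∀ j k, 0 < p k j → c k ≡ c j + 1 [MOD d]) {ω : ℂ} (hω : ω ^ d = 1)
    {lam : ℂ} {v : Fin r → ℂ} (hv : (Amat p m).mulVec v = lam • v) :
    (Amat p m).mulVec (fun k => ω ^ c k * v k) = (lam * ω) • fun k => ω ^ c k * v k := by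
  ext j
  have hj : ∑ k, Amat p m j k * v k = lam * v j := congrFun hv j
  have hterm : ∀ k, Amat p m j k * (ω ^ c k * v k) = ω ^ (c j + 1) * (Amat p m j k * v k) := by
    intro k
    by_cases hp : 0 < p k j
    · rw [pow_eq_pow_mod (c k) hω, pow_eq_pow_mod (c j + 1) hω, hc j k hp]
      ring
    · simp [Amat, hp]
  calc ∑ k, Amat p m j k * (ω ^ c k * v k)
      = ω ^ (c j + 1) * ∑ k, Amat p m j k * v k := by
        rw [Finset.mul_sum]
        exact Finset.sum_congr rfl fun k _ => hterm k
    _ = lam * ω * (ω ^ c j * v j) := by rw [hj]; ring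

theorem periodic_chain_eigenvalue_rotations (r : ℕ)
    (p : Fin (r + 2) → Fin (r + 2) → ℝ)
    (hpnn : ∀ j k, 0 ≤ p j k) (hpsum : ∀ k, ∑ j, p j k = 1)
    (hirred : ∀ j k : Fin (r + 2), ∃ l : ℕ, 0 < l ∧ 0 < (Pmat p ^ l) j k)
    (d : ℕ) (hd : 0 < d)
    (hddvd : ∀ (j : Fin (r + 2)) (n : ℕ), 0 < n → 0 < (Pmat p ^ n) j j → d ∣ n)
    (hdgcd : ∀ e : ℕ, (∀ (j : Fin (r + 2)) (n : ℕ), 0 < n →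
      0 < (Pmat p ^ n) j j → e ∣ n) → e ∣ d)
    (m : ℤ) (lam : ℂ) (hlam : ‖lam‖ = 1)
    (heig : ∃ v : Fin (r + 2) → ℂ, v ≠ 0 ∧ (Amat p m).mulVec v = lam • v) :
    ∀ t : ℕ, t < d →
      ∃ v : Fin (r + 2) → ℂ, v ≠ 0 ∧
        (Amat p m).mulVec v =
          (lam * Complex.exp (2 * (Real.pi : ℂ) * Complex.I * (t : ℂ) / (d : ℂ))) • v := by
  intro t _
  obtain ⟨v, hv0, hv⟩ := heig
  choose c _ hcpath using fun j => hirred j 0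
  set ω : ℂ := Complex.exp (2 * (Real.pi : ℂ) * Complex.I * (t : ℂ) / (d : ℂ)) with hω_def
  have hω : ω ^ d = 1 := by
    have hd0 : (d : ℂ) ≠ 0 := Nat.cast_ne_zero.2 hd.ne'
    rw [hω_def, ← Complex.exp_nat_mul, mul_div_cancel₀ _ hd0, Complex.exp_eq_one_iff]
    exact ⟨t, by push_cast; ring⟩
  have hc : ∀ j k, 0 < p k j → c k ≡ c j + 1 [MOD d] := by
    intro j k hjk
    have hstep : 0 < (Pmat p ^ 1) k j := by rwa [pow_one]
    rw [add_comm]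
    exact path_length_modEq hpnn hirred hddvd (hcpath k) (Pmat_pow_add_pos hpnn hstep (hcpath j))
  refine ⟨fun k => ω ^ c k * v k, fun h => hv0 ?_, mulVec_twist hc hω hv⟩
  ext k
  exact (mul_eq_zero.1 (congrFun h k)).resolve_left (pow_ne_zero _ (Complex.exp_ne_zero _))
end
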